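/- Fix an integer d ≥ 1, p ∈ (1,∞), a penalty function φ, and let (μ_t)_{t≥0} be a convolution semigroup in 𝒫_p(ℝ^d) with 𝒲_p(μ_t, δ_0) → 0 as t ↓ 0. Let t ≥ 0, let (t_n)_{n∈ℕ} be a sequence with t_n ∈ 2^{-n}ℕ₀, t_n ≤ t, and t_n → t, and let g, g_n ∈ C₀(ℝ^d) with ‖g_n − g‖_∞ → 0. Then lim_{n→∞} ‖𝒮^n(t_n)g_n − 𝒮(t)g‖_∞ = 0. -/

import Mathlib

open MeasureTheory Filter Topology ENNReal NNReal Set ZeroAtInfty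
noncomputable section

/-- Euclidean space ℝ^d. -/
abbrev Ed (d : ℕ) := EuclideanSpace ℝ (Fin d)

/-- `𝒫_p(ℝ^d)`: Borel probability measures with finite `p`-th moment. -/
def MemPp {d : ℕ} (p : ℝ) (μ : Measure (Ed d)) : Prop :=
  IsProbabilityMeasure μ ∧ ∫⁻ x, (‖x‖₊ : ℝ≥0∞) ^ p ∂μ < ∞

/-- `γ` is a coupling of `μ` and `ν`. -/
def IsCoupling {d : ℕ} (γ : Measure (Ed d × Ed d)) (μ ν : Measure (Ed d)) : Prop :=
  γ.map Prod.fst = μ ∧ γ.map Prod.snd = ν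

/-- The `p`-Wasserstein distance `𝒲_p(μ, ν)`. -/
def Wp {d : ℕ} (p : ℝ) (μ ν : Measure (Ed d)) : ℝ :=
  (⨅ γ ∈ {γ : Measure (Ed d × Ed d) | IsCoupling γ μ ν},
    (∫⁻ q, (‖q.2 - q.1‖₊ : ℝ≥0∞) ^ p ∂γ) ^ (1 / p)).toReal

/-- The scaled penalty `φ_t(r) = t·φ(r/t)` for `t > 0`; `φ_0(0) = 0`, `φ_0(r) = ∞` for `r > 0`. -/
def phit (φ : ℝ≥0 → ℝ≥0∞) (t : ℝ) (r : ℝ≥0) : ℝ≥0∞ :=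
  if 0 < t then (t.toNNReal : ℝ≥0∞) * φ (r / t.toNNReal) else (if r = 0 then 0 else ∞)

/-- `φ` is a penalty function: lower semicontinuous, convex, increasing, not constant,
`φ(0) = 0`, and `x ↦ φ(x^{1/p})` is convex. -/
structure IsPenalty (p : ℝ) (φ : ℝ≥0 → ℝ≥0∞) : Prop where
  lsc : LowerSemicontinuous φ
  convex : ∀ a b l m : ℝ≥0, l + m = 1 →
    φ (l * a + m * b) ≤ (l : ℝ≥0∞) * φ a + (m : ℝ≥0∞) * φ b
  mono : Monotone φ
  not_const : ∃ a b, φ a ≠ φ b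
  map_zero : φ 0 = 0
  convex_rpow : ∀ a b l m : ℝ≥0, l + m = 1 →
    φ ((l * a + m * b) ^ (1 / p)) ≤ (l : ℝ≥0∞) * φ (a ^ (1 / p)) + (m : ℝ≥0∞) * φ (b ^ (1 / p))

/-- The convex conjugate `φ*(y) = sup_{x ≥ 0} (xy − φ(x))`. -/
def phiStar (φ : ℝ≥0 → ℝ≥0∞) (y : ℝ≥0) : ℝ≥0∞ :=
  ⨆ x : ℝ≥0, ((x * y : ℝ≥0) : ℝ≥0∞) - φ x

/-- The one-step operator `S(t)f(x) = sup_ν ( ∫ f(x+y) ν(dy) − φ_t(𝒲_p(μ_t, ν)) )`. -/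
def Sop {d : ℕ} (p : ℝ) (φ : ℝ≥0 → ℝ≥0∞) (μt : Measure (Ed d)) (t : ℝ)
    (f : Ed d → ℝ) (x : Ed d) : ℝ :=
  sSup { r : ℝ | ∃ ν : Measure (Ed d), MemPp p ν ∧ ∃ c : ℝ, 0 ≤ c ∧
    phit φ t (Wp p μt ν).toNNReal ≤ ENNReal.ofReal c ∧ r = (∫ y, f (x + y) ∂ν) - c }

/-- The iterated operator `𝒮ⁿ(t) = S(2⁻ⁿ)^{∘ k} ∘ S(t − k·2⁻ⁿ)`, `k = ⌊2ⁿ t⌋`. -/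
def SiterN {d : ℕ} (p : ℝ) (φ : ℝ≥0 → ℝ≥0∞) (μ : ℝ → Measure (Ed d)) (n : ℕ) (t : ℝ)
    (f : Ed d → ℝ) : Ed d → ℝ :=
  (fun g => Sop p φ (μ ((2 : ℝ) ^ n)⁻¹) ((2 : ℝ) ^ n)⁻¹ g)^[⌊(2:ℝ)^n * t⌋₊]
    (Sop p φ (μ (t - ⌊(2:ℝ)^n * t⌋₊ * ((2:ℝ)^n)⁻¹)) (t - ⌊(2:ℝ)^n * t⌋₊ * ((2:ℝ)^n)⁻¹) f)

/-- The limiting operator `𝒮(t)f = lim_n 𝒮ⁿ(t)f` (a decreasing limit, i.e. an infimum). -/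
def Slim {d : ℕ} (p : ℝ) (φ : ℝ≥0 → ℝ≥0∞) (μ : ℝ → Measure (Ed d)) (t : ℝ)
    (f : Ed d → ℝ) (x : Ed d) : ℝ :=
  ⨅ n : ℕ, SiterN p φ μ n t f x

/-- `f ∈ C₀(ℝ^d)`: continuous and vanishing at infinity. -/
def IsC0 {d : ℕ} (f : Ed d → ℝ) : Prop :=
  Continuous f ∧ Tendsto f (cocompact (Ed d)) (𝓝 0)

/-- `(μ_t)_{t ≥ 0}` is a convolution semigroup in `𝒫_p(ℝ^d)`. -/
def IsConvSemigroup {d : ℕ} (p : ℝ) (μ : ℝ → Measure (Ed d)) : Prop :=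
  μ 0 = Measure.dirac 0 ∧ (∀ s t : ℝ, 0 ≤ s → 0 ≤ t → μ (s + t) = (μ s).conv (μ t)) ∧
    ∀ t : ℝ, 0 ≤ t → MemPp p (μ t)

/-- `𝒲_p(μ_t, δ_0) → 0` as `t ↓ 0`. -/
def WContinuousAtZero {d : ℕ} (p : ℝ) (μ : ℝ → Measure (Ed d)) : Prop :=
  Tendsto (fun t => Wp p (μ t) (Measure.dirac 0)) (𝓝[>] (0:ℝ)) (𝓝 0)

/-- The semigroup of the underlying Lévy process, `S^μ(t)f(x) = ∫ f(x+y) μ_t(dy)`. -/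
def Smu {d : ℕ} (μ : ℝ → Measure (Ed d)) (t : ℝ) (f : Ed d → ℝ) (x : Ed d) : ℝ :=
  ∫ y, f (x + y) ∂(μ t)

/-- `f ∈ D(A^μ)` with `A^μ f = Af`: `(S^μ(t)f − f)/t → Af` uniformly as `t ↓ 0`. -/
def HasGenerator {d : ℕ} (μ : ℝ → Measure (Ed d)) (f Af : Ed d → ℝ) : Prop :=
  TendstoUniformly (fun t x => (Smu μ t f x - f x) / t) Af (𝓝[>] (0:ℝ))

/-- `f ∈ C₀¹(ℝ^d)`: continuously differentiable, vanishing at infinity, with gradient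
vanishing at infinity. -/
def IsC01 {d : ℕ} (f : Ed d → ℝ) : Prop :=
  IsC0 f ∧ ContDiff ℝ 1 f ∧ Tendsto (fun x => gradient f x) (cocompact (Ed d)) (𝓝 0)

/-!
Each one-step operator `S(t)` commutes with translations and is a monotone sup-norm contraction of
the bounded uniformly continuous functions. The key inequality is `S(s) ∘ S(t) ≤ S(s + t)`: choose
near-optimal laws for the inner supremum measurably in the base point, glue the couplings, and use
Minkowski's inequality in `L^p` together with the joint convexity of `(t, r) ↦ φ_t(r)` and Jensen's
inequality for `x ↦ φ(x^{1/p})`. Hence `S^μ(t)f ≤ 𝒮ⁿ(t)f ≤ S(t)f` and `n ↦ 𝒮ⁿ(t)f` decreases. For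
`f ∈ C₀` both outer bounds vanish at infinity, and Dini's theorem makes the convergence
`𝒮ⁿ(t)f → 𝒮(t)f` uniform. The same two bounds show that iterates of total length less than `δ` move
`g` by at most `ε`, whatever the step size, since the first moments of `μ_s` tend to `0` and `φ`
grows superlinearly. So `𝒮ⁿ(tₙ)gₙ` may be compared with `𝒮ⁿ(tₙ)g` by contractivity, then with
`𝒮ⁿ(t)g` by factoring out the common iterates, and finally with `𝒮(t)g`.
-/

/-! ### Penalty functions -/

/-- The inequality `φ_t(r) ≤ c` between real numbers, with `c ≥ 0` built in because
`ENNReal.ofReal` truncates negative numbers. -/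
def PenaltyLE (φ : ℝ≥0 → ℝ≥0∞) (t r c : ℝ) : Prop :=
  0 ≤ c ∧ phit φ t r.toNNReal ≤ ENNReal.ofReal c

/-- The epigraph of `x ↦ φ (x ^ (1 / p))` as a subset of the plane. -/
def rpowEpigraph (p : ℝ) (φ : ℝ≥0 → ℝ≥0∞) : Set (ℝ × ℝ) :=
  {z | 0 ≤ z.1 ∧ 0 ≤ z.2 ∧ φ (z.1.toNNReal ^ (1 / p)) ≤ ENNReal.ofReal z.2}

section Penalty

variable {p : ℝ} {φ : ℝ≥0 → ℝ≥0∞} {s t a b r r' c e : ℝ}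

lemma penaltyLE_iff_of_pos (ht : 0 < t) (hr : 0 ≤ r) :
    PenaltyLE φ t r c ↔ 0 ≤ c ∧ φ (r / t).toNNReal ≤ ENNReal.ofReal (c / t) := by
  rw [PenaltyLE, phit, if_pos ht, Real.toNNReal_div hr, ENNReal.ofReal_div_of_pos ht,
    ENNReal.le_div_iff_mul_le (Or.inl (by simpa using ht)) (Or.inl (by simp)), mul_comm]
  rfl

lemma penaltyLE_zero_iff : PenaltyLE φ 0 r c ↔ 0 ≤ c ∧ r ≤ 0 := by
  rw [PenaltyLE, phit, if_neg (lt_irrefl _)]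
  by_cases hr : r ≤ 0 <;> simp [hr]

lemma penaltyLE_iff_mem_rpowEpigraph (hp : 0 < p) (ht : 0 < t) (hr : 0 ≤ r) :
    PenaltyLE φ t r c ↔ ((r / t) ^ p, c / t) ∈ rpowEpigraph p φ := by
  have hrt : 0 ≤ r / t := by positivity
  have hroot : ((r / t) ^ p).toNNReal ^ (1 / p) = (r / t).toNNReal := by
    rw [Real.toNNReal_rpow_of_nonneg hrt, one_div, NNReal.rpow_rpow_inv hp.ne']
  simp only [penaltyLE_iff_of_pos ht hr, rpowEpigraph, mem_ofPred_eq, hroot, Real.rpow_nonneg hrt,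
    true_and, le_div_iff₀ ht, zero_mul]

namespace IsPenalty

lemma penaltyLE_zero (hφ : IsPenalty p φ) : PenaltyLE φ t 0 0 := by
  refine ⟨le_rfl, ?_⟩
  unfold phit
  split_ifs <;> simp_all [hφ.map_zero]

lemma monotone_phit (hφ : IsPenalty p φ) (t : ℝ) : Monotone (phit φ t) := by
  intro r r' hrr'
  unfold phit
  split_ifs with ht hr hr' hr'
  · gcongr
    exact hφ.mono (by gcongr)
  · exact le_rfl
  · exact zero_le
  · exact absurd (le_antisymm (hr' ▸ hrr') zero_le) hr
  · exact le_rfl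

lemma penaltyLE_of_le (hφ : IsPenalty p φ) (h : PenaltyLE φ t r' c) (hr : r ≤ r') :
    PenaltyLE φ t r c :=
  ⟨h.1, (hφ.monotone_phit t (Real.toNNReal_le_toNNReal hr)).trans h.2⟩

lemma penaltyLE_add_of_pos (hφ : IsPenalty p φ) (hs : 0 < s) (ht : 0 < t) (ha : 0 ≤ a)
    (hb : 0 ≤ b) (hac : PenaltyLE φ s a c) (hbe : PenaltyLE φ t b e) :
    PenaltyLE φ (s + t) (a + b) (c + e) := by
  rw [penaltyLE_iff_of_pos (by positivity) (by positivity)] at *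
  obtain ⟨hc, hac⟩ := hac
  obtain ⟨he, hbe⟩ := hbe
  have hst : 0 < s + t := by positivity
  have hweights : (s / (s + t)).toNNReal + (t / (s + t)).toNNReal = 1 := by
    rw [← Real.toNNReal_add (by positivity) (by positivity), ← add_div, div_self hst.ne',
      Real.toNNReal_one]
  have hconv := hφ.convex (a / s).toNNReal (b / t).toNNReal _ _ hweights
  rw [← Real.toNNReal_mul (by positivity), ← Real.toNNReal_mul (by positivity),
    ← Real.toNNReal_add (by positivity) (by positivity),
    show s / (s + t) * (a / s) + t / (s + t) * (b / t) = (a + b) / (s + t) by field_simp] at hconv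
  refine ⟨add_nonneg hc he, hconv.trans ?_⟩
  rw [show (c + e) / (s + t) = s / (s + t) * (c / s) + t / (s + t) * (e / t) by field_simp,
    ENNReal.ofReal_add (by positivity) (by positivity),
    ENNReal.ofReal_mul (by positivity), ENNReal.ofReal_mul (by positivity)]
  gcongr <;> exact le_rfl

lemma penaltyLE_add (hφ : IsPenalty p φ) (hs : 0 ≤ s) (ht : 0 ≤ t) (ha : 0 ≤ a) (hb : 0 ≤ b)
    (hac : PenaltyLE φ s a c) (hbe : PenaltyLE φ t b e) :
    PenaltyLE φ (s + t) (a + b) (c + e) := by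
  rcases hs.eq_or_lt with rfl | hs
  · obtain ⟨hc, ha'⟩ := penaltyLE_zero_iff.1 hac
    rw [le_antisymm ha' ha, zero_add, zero_add]
    exact ⟨by linarith [hbe.1], hbe.2.trans (ENNReal.ofReal_le_ofReal (by linarith))⟩
  rcases ht.eq_or_lt with rfl | ht
  · obtain ⟨he, hb'⟩ := penaltyLE_zero_iff.1 hbe
    rw [le_antisymm hb' hb, add_zero, add_zero]
    exact ⟨by linarith [hac.1], hac.2.trans (ENNReal.ofReal_le_ofReal (by linarith))⟩
  exact hφ.penaltyLE_add_of_pos hs ht ha hb hac hbe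

lemma convex_rpowEpigraph (hφ : IsPenalty p φ) : Convex ℝ (rpowEpigraph p φ) := by
  rintro ⟨x, c⟩ ⟨hx, hc, hxc⟩ ⟨y, e⟩ ⟨hy, he, hye⟩ l m hl hm hlm
  simp only at hx hc hxc hy he hye
  simp only [rpowEpigraph, mem_ofPred_eq, Prod.smul_mk, Prod.mk_add_mk, smul_eq_mul]
  refine ⟨by positivity, by positivity, ?_⟩
  have hconv := hφ.convex_rpow x.toNNReal y.toNNReal l.toNNReal m.toNNReal
    (by rw [← Real.toNNReal_add hl hm, hlm, Real.toNNReal_one])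
  rw [← Real.toNNReal_mul hl, ← Real.toNNReal_mul hm,
    ← Real.toNNReal_add (by positivity) (by positivity)] at hconv
  refine hconv.trans ?_
  rw [ENNReal.ofReal_add (by positivity) (by positivity),
    ENNReal.ofReal_mul (by positivity), ENNReal.ofReal_mul (by positivity)]
  gcongr <;> exact le_rfl

lemma isClosed_rpowEpigraph (hp : 0 ≤ p) (hφ : IsPenalty p φ) : IsClosed (rpowEpigraph p φ) := by
  have hcont : Continuous fun z : ℝ × ℝ =>
      ((z.1.toNNReal ^ (1 / p), ENNReal.ofReal z.2) : ℝ≥0 × ℝ≥0∞) :=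
    ((NNReal.continuous_rpow_const (by positivity)).comp
      (continuous_real_toNNReal.comp continuous_fst)).prodMk
      (ENNReal.continuous_ofReal.comp continuous_snd)
  exact (isClosed_le continuous_const continuous_fst).inter
    ((isClosed_le continuous_const continuous_snd).inter
      (hφ.lsc.isClosed_epigraph.preimage hcont))

/-- Jensen's inequality for the closed convex epigraph of `x ↦ φ (x ^ (1 / p))`. -/
lemma penaltyLE_lpNorm {Ω : Type*} [MeasurableSpace Ω] {ν : Measure Ω} [IsProbabilityMeasure ν]
    (hp : 0 < p) (hφ : IsPenalty p φ) (ht : 0 ≤ t) {a c : Ω → ℝ} (ha : ∀ y, 0 ≤ a y)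
    (haL : MemLp a (ENNReal.ofReal p) ν) (hc : Integrable c ν)
    (hac : ∀ y, PenaltyLE φ t (a y) (c y)) :
    PenaltyLE φ t (lpNorm a (ENNReal.ofReal p) ν) (∫ y, c y ∂ν) := by
  rcases ht.eq_or_lt with rfl | ht
  · have ha0 : a = 0 := funext fun y => le_antisymm (penaltyLE_zero_iff.1 (hac y)).2 (ha y)
    rw [penaltyLE_zero_iff, ha0, lpNorm_zero]
    exact ⟨integral_nonneg fun y => (hac y).1, le_rfl⟩
  have hp' : ENNReal.ofReal p ≠ 0 := by simpa using hp
  have hnorm : lpNorm a (ENNReal.ofReal p) ν = (∫ y, a y ^ p ∂ν) ^ p⁻¹ := by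
    rw [lpNorm_eq_integral_norm_rpow_toReal hp' ENNReal.ofReal_ne_top haL.1,
      ENNReal.toReal_ofReal hp.le]
    simp only [Real.norm_of_nonneg (ha _)]
  have hap : Integrable (fun y => a y ^ p) ν := by
    have := haL.integrable_norm_rpow hp' ENNReal.ofReal_ne_top
    simpa only [ENNReal.toReal_ofReal hp.le, Real.norm_of_nonneg (ha _)] using this
  have hmem : ∀ y, (a y ^ p / t ^ p, c y / t) ∈ rpowEpigraph p φ := fun y => by
    rw [← Real.div_rpow (ha y) ht.le]
    exact (penaltyLE_iff_mem_rpowEpigraph hp ht (ha y)).1 (hac y)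
  have hmean := hφ.convex_rpowEpigraph.integral_mem (hφ.isClosed_rpowEpigraph hp.le)
    (Eventually.of_forall hmem) ((hap.div_const _).prodMk (hc.div_const _))
  rw [integral_pair (hap.div_const _) (hc.div_const _), integral_div, integral_div] at hmean
  rwa [penaltyLE_iff_mem_rpowEpigraph hp ht lpNorm_nonneg, Real.div_rpow lpNorm_nonneg ht.le,
    hnorm, Real.rpow_inv_rpow (integral_nonneg fun y => Real.rpow_nonneg (ha y) p) hp.ne']

lemma rpow_mul_le (hp : 0 < p) (hφ : IsPenalty p φ) {r₀ r : ℝ≥0} (hr₀ : 0 < r₀) (hr : r₀ ≤ r) :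
    ((r / r₀) ^ p : ℝ≥0) * φ r₀ ≤ φ r := by
  set l : ℝ≥0 := (r₀ / r) ^ p with hl
  have hr_pos : 0 < r := hr₀.trans_le hr
  have hl_le : l ≤ 1 := NNReal.rpow_le_one (div_le_one_of_le₀ hr zero_le) hp.le
  have hl_mul : (r / r₀) ^ p * l = 1 := by
    rw [hl, ← NNReal.mul_rpow, div_mul_div_cancel₀ hr₀.ne', div_self hr_pos.ne', NNReal.one_rpow]
  have hroot : (l * r ^ p + (1 - l) * 0) ^ (1 / p) = r₀ := by
    rw [mul_zero, add_zero, hl, ← NNReal.mul_rpow, div_mul_cancel₀ _ hr_pos.ne', one_div,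
      NNReal.rpow_rpow_inv hp.ne']
  have hconv := hφ.convex_rpow (r ^ p) 0 l (1 - l) (add_tsub_cancel_of_le hl_le)
  rw [hroot, one_div, NNReal.rpow_rpow_inv hp.ne', NNReal.zero_rpow (by positivity),
    hφ.map_zero, mul_zero, add_zero] at hconv
  calc ((r / r₀) ^ p : ℝ≥0) * φ r₀ ≤ ((r / r₀) ^ p : ℝ≥0) * (l * φ r) := by gcongr
    _ = φ r := by rw [← mul_assoc, ← ENNReal.coe_mul, hl_mul, ENNReal.coe_one, one_mul]

lemma exists_pos_le (hφ : IsPenalty p φ) :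
    ∃ r₀ a : ℝ≥0, 0 < r₀ ∧ 0 < a ∧ (a : ℝ≥0∞) ≤ φ r₀ := by
  obtain ⟨r₀, hr₀⟩ : ∃ r₀, 0 < φ r₀ := by
    obtain ⟨x, y, hxy⟩ := hφ.not_const
    by_contra! h
    exact hxy (by rw [nonpos_iff_eq_zero.1 (h x), nonpos_iff_eq_zero.1 (h y)])
  obtain ⟨a, ha, ha'⟩ := ENNReal.lt_iff_exists_nnreal_btwn.1 hr₀
  refine ⟨r₀, a, pos_iff_ne_zero.2 ?_, by exact_mod_cast ha, ha'.le⟩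
  rintro rfl
  exact hr₀.ne' hφ.map_zero

lemma exists_mul_rpow_le (hp : 0 < p) (hφ : IsPenalty p φ) :
    ∃ a R : ℝ, 0 < a ∧ 0 < R ∧
      ∀ r c : ℝ, R ≤ r → 0 ≤ c → φ r.toNNReal ≤ ENNReal.ofReal c → a * r ^ p ≤ c := by
  obtain ⟨r₀, a, hr₀, ha, haφ⟩ := hφ.exists_pos_le
  refine ⟨a / (r₀ : ℝ) ^ p, r₀, by positivity, by exact_mod_cast hr₀, fun r c hr hc h => ?_⟩
  have hr_nonneg : 0 ≤ r := r₀.2.trans hr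
  have hle : (((r.toNNReal / r₀) ^ p * a : ℝ≥0) : ℝ≥0∞) ≤ c.toNNReal := by
    rw [ENNReal.coe_mul]
    refine le_trans ?_ ((hφ.rpow_mul_le hp hr₀ (NNReal.le_toNNReal_of_coe_le hr)).trans h)
    gcongr
  have hle_real : (r / r₀) ^ p * a ≤ c := by
    have := NNReal.coe_le_coe.2 (ENNReal.coe_le_coe.1 hle)
    simpa only [NNReal.coe_mul, NNReal.coe_rpow, NNReal.coe_div, Real.coe_toNNReal _ hr_nonneg,
      Real.coe_toNNReal _ hc] using this
  rw [Real.div_rpow hr_nonneg r₀.coe_nonneg] at hle_real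
  convert hle_real using 1
  ring

lemma exists_mul_le_add (hp : 1 < p) (hφ : IsPenalty p φ) (C : ℝ) :
    ∃ K : ℝ, 0 ≤ K ∧
      ∀ r c : ℝ, 0 ≤ r → 0 ≤ c → φ r.toNNReal ≤ ENNReal.ofReal c → C * r ≤ c + K := by
  obtain ⟨a, R, ha, hR, hgrowth⟩ := hφ.exists_mul_rpow_le (by linarith)
  obtain ⟨R', hR'⟩ : ∃ R', ∀ r ≥ R', C / a ≤ r ^ (p - 1) :=
    eventually_atTop.1 ((_root_.tendsto_rpow_atTop (by linarith)).eventually_ge_atTop _)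
  refine ⟨|C| * max R R', by positivity, fun r c hr hc h => ?_⟩
  rcases le_total r (max R R') with hle | hge
  · have : C * r ≤ |C| * max R R' := by
      gcongr
      exact le_abs_self C
    linarith
  · have hr_pos : 0 < r := hR.trans_le ((le_max_left _ _).trans hge)
    calc C * r ≤ r ^ (p - 1) * a * r := by
          gcongr
          exact (div_le_iff₀ ha).1 (hR' r ((le_max_right _ _).trans hge))
      _ = a * r ^ p := by rw [Real.rpow_sub_one hr_pos.ne']; field_simp
      _ ≤ c := hgrowth r c ((le_max_left _ _).trans hge) hc h
      _ ≤ c + |C| * max R R' := by linarith [show 0 ≤ |C| * max R R' by positivity]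

lemma exists_penaltyLE_mul_le (hp : 1 < p) (hφ : IsPenalty p φ) (C : ℝ) :
    ∃ K : ℝ, 0 ≤ K ∧
      ∀ t r c : ℝ, 0 ≤ t → 0 ≤ r → PenaltyLE φ t r c → C * r ≤ c + t * K := by
  obtain ⟨K, hK, h⟩ := hφ.exists_mul_le_add hp C
  refine ⟨K, hK, fun t r c ht hr hrc => ?_⟩
  rcases ht.eq_or_lt with rfl | ht
  · obtain ⟨hc, hr'⟩ := penaltyLE_zero_iff.1 hrc
    rw [le_antisymm hr' hr]
    linarith
  · obtain ⟨hc, hrc⟩ := (penaltyLE_iff_of_pos ht hr).1 hrc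
    calc C * r = t * (C * (r / t)) := by field_simp
      _ ≤ t * (c / t + K) := by gcongr; exact h _ _ (by positivity) (by positivity) hrc
      _ = c + t * K := by field_simp

end IsPenalty

end Penalty

/-! ### Couplings and the Wasserstein distance -/

/-- The `L^p`-transport cost of a plan `γ`, i.e. the `L^p`-norm of the displacement. -/
def transportCost {d : ℕ} (p : ℝ) (γ : Measure (Ed d × Ed d)) : ℝ≥0∞ :=
  eLpNorm (fun q : Ed d × Ed d => q.2 - q.1) (ENNReal.ofReal p) γ

section Wasserstein

variable {d : ℕ} {p δ : ℝ} {μ ν : Measure (Ed d)} {γ : Measure (Ed d × Ed d)}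

lemma lintegral_nnnorm_rpow_eq_eLpNorm {Ω E : Type*} [MeasurableSpace Ω] [NormedAddCommGroup E]
    (hp : 0 < p) (m : Measure Ω) (f : Ω → E) :
    (∫⁻ x, (‖f x‖₊ : ℝ≥0∞) ^ p ∂m) ^ (1 / p) = eLpNorm f (ENNReal.ofReal p) m := by
  rw [eLpNorm_eq_lintegral_rpow_enorm_toReal (by simpa using hp) ENNReal.ofReal_ne_top,
    ENNReal.toReal_ofReal hp.le]
  rfl

lemma memPp_iff_memLp_id (hp : 0 < p) :
    MemPp p μ ↔ IsProbabilityMeasure μ ∧ MemLp id (ENNReal.ofReal p) μ := by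
  rw [MemPp, MemLp, and_iff_right aestronglyMeasurable_id,
    ← lintegral_nnnorm_rpow_eq_eLpNorm hp μ id, ENNReal.rpow_lt_top_iff_of_pos (by positivity)]
  rfl

lemma MemPp.memLp_id (hp : 0 < p) (hμ : MemPp p μ) : MemLp id (ENNReal.ofReal p) μ :=
  ((memPp_iff_memLp_id hp).1 hμ).2

lemma MemPp.integrable_norm (hp : 1 ≤ p) (hμ : MemPp p μ) : Integrable (fun x => ‖x‖) μ := by
  have := hμ.1
  exact ((hμ.memLp_id (by linarith)).integrable (by simpa using hp)).norm

lemma memPp_dirac_zero (hp : 0 < p) : MemPp p (Measure.dirac (0 : Ed d)) := by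
  refine ⟨inferInstance, ?_⟩
  rw [lintegral_dirac]
  simp [ENNReal.zero_rpow_of_pos hp]

lemma MemPp.conv (hp : 0 < p) (hμ : MemPp p μ) (hν : MemPp p ν) : MemPp p (μ.conv ν) := by
  have := hμ.1
  have := hν.1
  refine (memPp_iff_memLp_id hp).2 ⟨inferInstance, ?_⟩
  rw [Measure.conv, memLp_map_measure_iff aestronglyMeasurable_id (by fun_prop)]
  exact ((hμ.memLp_id hp).comp_fst ν).add ((hν.memLp_id hp).comp_snd μ)

namespace IsCoupling

lemma isProbabilityMeasure [IsProbabilityMeasure μ] (hγ : IsCoupling γ μ ν) :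
    IsProbabilityMeasure γ := by
  have : IsProbabilityMeasure (γ.map Prod.fst) := hγ.1 ▸ inferInstance
  exact Measure.isProbabilityMeasure_of_map Prod.fst

lemma prod (μ ν : Measure (Ed d)) [IsProbabilityMeasure μ] [IsProbabilityMeasure ν] :
    IsCoupling (μ.prod ν) μ ν :=
  ⟨by simp [Measure.map_fst_prod], by simp [Measure.map_snd_prod]⟩

lemma diag (μ : Measure (Ed d)) : IsCoupling (μ.map fun x => (x, x)) μ μ := by
  constructor <;> rw [Measure.map_map (by fun_prop) (by fun_prop)] <;> exact Measure.map_id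

lemma swap (hγ : IsCoupling γ μ ν) : IsCoupling (γ.map Prod.swap) ν μ := by
  constructor <;> rw [Measure.map_map (by fun_prop) (by fun_prop)]
  exacts [hγ.2, hγ.1]

lemma memLp_fst {q : ℝ≥0∞} (hγ : IsCoupling γ μ ν) (hμ : MemLp id q μ) :
    MemLp (fun z : Ed d × Ed d => z.1) q γ :=
  (memLp_map_measure_iff aestronglyMeasurable_id (by fun_prop)).1 (hγ.1.symm ▸ hμ)

lemma memLp_snd {q : ℝ≥0∞} (hγ : IsCoupling γ μ ν) (hν : MemLp id q ν) :
    MemLp (fun z : Ed d × Ed d => z.2) q γ :=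
  (memLp_map_measure_iff aestronglyMeasurable_id (by fun_prop)).1 (hγ.2.symm ▸ hν)

lemma memLp_sub (hcost : transportCost p γ < ∞) :
    MemLp (fun z : Ed d × Ed d => z.2 - z.1) (ENNReal.ofReal p) γ :=
  ⟨by fun_prop, hcost⟩

lemma transportCost_lt_top (hp : 0 < p) (hγ : IsCoupling γ μ ν) (hμ : MemPp p μ)
    (hν : MemPp p ν) : transportCost p γ < ∞ :=
  ((hγ.memLp_snd (hν.memLp_id hp)).sub (hγ.memLp_fst (hμ.memLp_id hp))).2

lemma memPp_snd (hp : 0 < p) (hγ : IsCoupling γ μ ν) (hμ : MemPp p μ)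
    (hcost : transportCost p γ < ∞) : MemPp p ν := by
  have := hμ.1
  have := hγ.isProbabilityMeasure
  refine (memPp_iff_memLp_id hp).2 ⟨hγ.2 ▸ Measure.isProbabilityMeasure_map (by fun_prop), ?_⟩
  rw [← hγ.2, memLp_map_measure_iff aestronglyMeasurable_id (by fun_prop)]
  convert (hγ.memLp_fst (hμ.memLp_id hp)).add (memLp_sub hcost) using 1
  ext1 z
  simp

end IsCoupling

lemma transportCost_diag (p : ℝ) (μ : Measure (Ed d)) :
    transportCost p (μ.map fun x => (x, x)) = 0 := by
  rw [transportCost, eLpNorm_map_measure (by fun_prop) (by fun_prop)]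
  simp [Function.comp_def]

lemma transportCost_swap (p : ℝ) (γ : Measure (Ed d × Ed d)) :
    transportCost p (γ.map Prod.swap) = transportCost p γ := by
  rw [transportCost, eLpNorm_map_measure (by fun_prop) (by fun_prop), ← eLpNorm_neg]
  simp [transportCost, Function.comp_def, Pi.neg_def]

lemma Wp_eq_toReal_iInf_transportCost (hp : 0 < p) (μ ν : Measure (Ed d)) :
    Wp p μ ν = (⨅ γ ∈ {γ | IsCoupling γ μ ν}, transportCost p γ).toReal := by
  simp only [Wp, transportCost,
    ← lintegral_nnnorm_rpow_eq_eLpNorm hp _ fun q : Ed d × Ed d => q.2 - q.1]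

lemma Wp_nonneg (p : ℝ) (μ ν : Measure (Ed d)) : 0 ≤ Wp p μ ν := ENNReal.toReal_nonneg

lemma Wp_le_of_transportCost_le {a : ℝ} (hp : 0 < p) (hγ : IsCoupling γ μ ν) (ha : 0 ≤ a)
    (hcost : transportCost p γ ≤ ENNReal.ofReal a) : Wp p μ ν ≤ a := by
  rw [Wp_eq_toReal_iInf_transportCost hp]
  exact ENNReal.toReal_le_of_le_ofReal ha ((iInf₂_le γ hγ).trans hcost)

lemma exists_coupling_transportCost_le (hp : 0 < p) (hμ : MemPp p μ) (hν : MemPp p ν)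
    (hδ : 0 < δ) :
    ∃ γ, IsCoupling γ μ ν ∧ transportCost p γ ≤ ENNReal.ofReal (Wp p μ ν + δ) := by
  have := hμ.1
  have := hν.1
  have hfin : (⨅ γ ∈ {γ | IsCoupling γ μ ν}, transportCost p γ) ≠ ∞ :=
    ((iInf₂_le (μ.prod ν) (IsCoupling.prod μ ν)).trans_lt
      ((IsCoupling.prod μ ν).transportCost_lt_top hp hμ hν)).ne
  have hlt : (⨅ γ ∈ {γ | IsCoupling γ μ ν}, transportCost p γ)
      < ENNReal.ofReal (Wp p μ ν + δ) := by
    rw [Wp_eq_toReal_iInf_transportCost hp, ENNReal.lt_ofReal_iff_toReal_lt hfin]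
    linarith
  simp only [iInf_lt_iff, exists_prop] at hlt
  obtain ⟨γ, hγ, hcost⟩ := hlt
  exact ⟨γ, hγ, hcost.le⟩

lemma Wp_self (hp : 0 < p) (μ : Measure (Ed d)) : Wp p μ μ = 0 :=
  le_antisymm (Wp_le_of_transportCost_le hp (IsCoupling.diag μ) le_rfl
    (by simp [transportCost_diag])) (Wp_nonneg _ _ _)

lemma Wp_le_Wp_swap (hp : 0 < p) (hμ : MemPp p μ) (hν : MemPp p ν) : Wp p μ ν ≤ Wp p ν μ := by
  refine le_of_forall_pos_le_add fun δ hδ => ?_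
  obtain ⟨γ, hγ, hcost⟩ := exists_coupling_transportCost_le hp hν hμ hδ
  exact Wp_le_of_transportCost_le hp hγ.swap (add_nonneg (Wp_nonneg _ _ _) hδ.le)
    ((transportCost_swap p γ).trans_le hcost)

lemma integral_norm_sub_le_toReal_transportCost [IsProbabilityMeasure γ] (hp : 1 ≤ p)
    (hcost : transportCost p γ < ∞) :
    ∫ q, ‖q.2 - q.1‖ ∂γ ≤ (transportCost p γ).toReal := by
  rw [integral_norm_eq_lintegral_enorm (by fun_prop), ← eLpNorm_one_eq_lintegral_enorm]
  exact ENNReal.toReal_mono hcost.ne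
    (eLpNorm_le_eLpNorm_of_exponent_le (by simpa using hp) (by fun_prop))

lemma integral_norm_le_add_Wp (hp : 1 ≤ p) (hμ : MemPp p μ) (hν : MemPp p ν) :
    ∫ y, ‖y‖ ∂ν ≤ ∫ x, ‖x‖ ∂μ + Wp p μ ν := by
  have hp0 : 0 < p := by linarith
  have hp1 : 1 ≤ ENNReal.ofReal p := by simpa using hp
  have := hμ.1
  refine le_of_forall_pos_le_add fun δ hδ => ?_
  obtain ⟨γ, hγ, hcost⟩ := exists_coupling_transportCost_le hp0 hμ hν hδ
  have hcost_top : transportCost p γ < ∞ := hcost.trans_lt ENNReal.ofReal_lt_top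
  have := hγ.isProbabilityMeasure
  have hfst : Integrable (fun q : Ed d × Ed d => ‖q.1‖) γ :=
    ((hγ.memLp_fst (hμ.memLp_id hp0)).integrable hp1).norm
  have hsub : Integrable (fun q : Ed d × Ed d => ‖q.2 - q.1‖) γ :=
    ((IsCoupling.memLp_sub hcost_top).integrable hp1).norm
  calc ∫ y, ‖y‖ ∂ν = ∫ q, ‖q.2‖ ∂γ := by
        rw [← hγ.2, integral_map (by fun_prop) (by fun_prop)]
    _ ≤ ∫ q, (‖q.1‖ + ‖q.2 - q.1‖) ∂γ :=
        integral_mono_of_nonneg (Eventually.of_forall fun q => norm_nonneg _) (hfst.add hsub)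
          (Eventually.of_forall fun q => norm_le_insert' q.2 q.1)
    _ = ∫ x, ‖x‖ ∂μ + ∫ q, ‖q.2 - q.1‖ ∂γ := by
        rw [integral_add hfst hsub, ← hγ.1, integral_map (by fun_prop) (by fun_prop)]
    _ ≤ ∫ x, ‖x‖ ∂μ + (Wp p μ ν + δ) := by
        gcongr
        exact (integral_norm_sub_le_toReal_transportCost hp hcost_top).trans
          (ENNReal.toReal_le_of_le_ofReal (add_nonneg (Wp_nonneg _ _ _) hδ.le) hcost)
    _ = ∫ x, ‖x‖ ∂μ + Wp p μ ν + δ := by ring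

lemma integral_norm_le_Wp_dirac_zero (hp : 1 ≤ p) (hμ : MemPp p μ) :
    ∫ x, ‖x‖ ∂μ ≤ Wp p μ (Measure.dirac 0) := by
  have hδ₀ : MemPp p (Measure.dirac (0 : Ed d)) := memPp_dirac_zero (by linarith)
  calc ∫ x, ‖x‖ ∂μ ≤ Wp p (Measure.dirac 0) μ := by
        simpa using integral_norm_le_add_Wp hp hδ₀ hμ
    _ ≤ Wp p μ (Measure.dirac 0) := Wp_le_Wp_swap (by linarith) hδ₀ hμ

end Wasserstein

/-! ### Translation-equivariant contractions -/

/-- Bounded uniformly continuous real-valued functions. -/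
structure IsBUC {E : Type*} [SeminormedAddCommGroup E] (f : E → ℝ) : Prop where
  exists_abs_le : ∃ M : ℝ, ∀ x, |f x| ≤ M
  uniformContinuous : UniformContinuous f

/-- Operators on bounded uniformly continuous functions that commute with translations, do not
increase bounds, and are monotone and nonexpansive for the supremum norm (both in `le_add`). -/
structure IsEquivariantContraction {E : Type*} [SeminormedAddCommGroup E]
    (T : (E → ℝ) → E → ℝ) : Prop where
  abs_apply_le : ∀ {f : E → ℝ} {M : ℝ}, IsBUC f → (∀ x, |f x| ≤ M) → ∀ x, |T f x| ≤ M
  le_add : ∀ {f g : E → ℝ} {ε : ℝ}, IsBUC f → IsBUC g → (∀ x, f x ≤ g x + ε) →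
    ∀ x, T f x ≤ T g x + ε
  translate : ∀ (f : E → ℝ) (h x : E), T f (x + h) = T (fun z => f (z + h)) x

section EquivariantContraction

variable {E : Type*} [SeminormedAddCommGroup E] {f g : E → ℝ} {S T : (E → ℝ) → E → ℝ} {ε : ℝ}

namespace IsBUC

lemma translate (hf : IsBUC f) (h : E) : IsBUC fun z => f (z + h) := by
  obtain ⟨M, hM⟩ := hf.exists_abs_le
  exact ⟨⟨M, fun x => hM _⟩,
    hf.uniformContinuous.comp (uniformContinuous_id.add uniformContinuous_const)⟩

lemma exists_abs_translate_sub_le (hf : IsBUC f) (hε : 0 < ε) :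
    ∃ δ > 0, ∀ h : E, ‖h‖ < δ → ∀ z, |f (z + h) - f z| ≤ ε := by
  obtain ⟨δ, hδ, hfδ⟩ := Metric.uniformContinuous_iff.1 hf.uniformContinuous ε hε
  refine ⟨δ, hδ, fun h hh z => ?_⟩
  simpa [Real.dist_eq] using (hfδ (a := z + h) (b := z) (by simpa [dist_eq_norm] using hh)).le

lemma exists_abs_translate_sub_le_add_mul_norm (hf : IsBUC f) (hε : 0 < ε) :
    ∃ C : ℝ, 0 ≤ C ∧ ∀ x y, |f (x + y) - f x| ≤ ε + C * ‖y‖ := by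
  obtain ⟨δ, hδ, hfδ⟩ := hf.exists_abs_translate_sub_le hε
  obtain ⟨M, hM⟩ := hf.exists_abs_le
  have hM0 : 0 ≤ M := (abs_nonneg _).trans (hM 0)
  refine ⟨2 * M / δ, by positivity, fun x y => ?_⟩
  rcases lt_or_ge ‖y‖ δ with hy | hy
  · have : 0 ≤ 2 * M / δ * ‖y‖ := by positivity
    linarith [hfδ y hy x]
  · have hfar : 2 * M ≤ 2 * M / δ * ‖y‖ := by
      rw [div_mul_eq_mul_div, le_div_iff₀ hδ]
      gcongr
    linarith [abs_sub (f (x + y)) (f x), hM (x + y), hM x]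

lemma integrable_comp_add [MeasurableSpace E] [OpensMeasurableSpace E]
    [SecondCountableTopology E] (hf : IsBUC f) (x : E) (ν : Measure E) [IsFiniteMeasure ν] :
    Integrable (fun y => f (x + y)) ν := by
  obtain ⟨M, hM⟩ := hf.exists_abs_le
  have hcont : Continuous fun y => f (x + y) :=
    hf.uniformContinuous.continuous.comp (continuous_const_add x)
  exact Integrable.of_bound hcont.aestronglyMeasurable M (Eventually.of_forall fun y => hM _)

end IsBUC

lemma uniformContinuous_of_exists_abs_translate_sub_le
    (hf : ∀ ε > 0, ∃ δ > 0, ∀ h : E, ‖h‖ < δ → ∀ z, |f (z + h) - f z| ≤ ε) :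
    UniformContinuous f := by
  refine Metric.uniformContinuous_iff.2 fun ε hε => ?_
  obtain ⟨δ, hδ, hfδ⟩ := hf (ε / 2) (half_pos hε)
  refine ⟨δ, hδ, fun {a b} hab => ?_⟩
  have hle := hfδ (a - b) (by rwa [← dist_eq_norm]) b
  rw [add_sub_cancel] at hle
  exact hle.trans_lt (half_lt_self hε)

namespace IsEquivariantContraction

lemma mono (hT : IsEquivariantContraction T) (hf : IsBUC f) (hg : IsBUC g) (hfg : ∀ x, f x ≤ g x)
    (x : E) : T f x ≤ T g x := by
  simpa using hT.le_add hf hg (ε := 0) (by simpa using hfg) x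

lemma abs_sub_le (hT : IsEquivariantContraction T) (hf : IsBUC f) (hg : IsBUC g)
    (hfg : ∀ x, |f x - g x| ≤ ε) (x : E) : |T f x - T g x| ≤ ε := by
  have hle := hT.le_add hf hg (ε := ε) (fun x => by linarith [(abs_le.1 (hfg x)).2]) x
  have hge := hT.le_add hg hf (ε := ε) (fun x => by linarith [(abs_le.1 (hfg x)).1]) x
  exact abs_le.2 ⟨by linarith, by linarith⟩

lemma abs_translate_sub_le (hT : IsEquivariantContraction T) (hf : IsBUC f) {h : E}
    (hfh : ∀ z, |f (z + h) - f z| ≤ ε) (z : E) : |T f (z + h) - T f z| ≤ ε := by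
  rw [hT.translate]
  exact hT.abs_sub_le (hf.translate h) hf hfh z

lemma isBUC (hT : IsEquivariantContraction T) (hf : IsBUC f) : IsBUC (T f) := by
  obtain ⟨M, hM⟩ := hf.exists_abs_le
  refine ⟨⟨M, hT.abs_apply_le hf hM⟩,
    uniformContinuous_of_exists_abs_translate_sub_le fun ε hε => ?_⟩
  obtain ⟨δ, hδ, hfδ⟩ := hf.exists_abs_translate_sub_le hε
  exact ⟨δ, hδ, fun h hh => hT.abs_translate_sub_le hf (hfδ h hh)⟩

lemma comp (hS : IsEquivariantContraction S) (hT : IsEquivariantContraction T) :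
    IsEquivariantContraction (S ∘ T) where
  abs_apply_le hf hM := hS.abs_apply_le (hT.isBUC hf) (hT.abs_apply_le hf hM)
  le_add hf hg hfg := hS.le_add (hT.isBUC hf) (hT.isBUC hg) (hT.le_add hf hg hfg)
  translate f h x := by
    simp only [Function.comp_apply, hS.translate, hT.translate f h]

lemma iterate (hT : IsEquivariantContraction T) : ∀ k : ℕ, IsEquivariantContraction T^[k]
  | 0 => ⟨fun _ hM => hM, fun _ _ hfg => hfg, fun _ _ _ => rfl⟩
  | k + 1 => (hT.iterate k).comp hT

end IsEquivariantContraction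

end EquivariantContraction

/-! ### The one-step operators -/

section OneStep

variable {d : ℕ} {p : ℝ} {φ : ℝ≥0 → ℝ≥0∞} {μ : ℝ → Measure (Ed d)} {μt ν : Measure (Ed d)}
  {t a C K M ε : ℝ} {f g : Ed d → ℝ} {x : Ed d}

lemma IsC0.isBUC (hf : IsC0 f) : IsBUC f := by
  let F : C₀(Ed d, ℝ) := ⟨⟨f, hf.1⟩, hf.2⟩
  exact ⟨⟨‖F‖, F.toBCF.norm_coe_le_norm⟩, ZeroAtInftyContinuousMap.uniformContinuous F⟩

lemma abs_integral_comp_add_le [IsProbabilityMeasure ν] (hM : ∀ x, |f x| ≤ M) (x : Ed d) :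
    |∫ y, f (x + y) ∂ν| ≤ M := by
  simpa using norm_integral_le_of_norm_le_const (μ := ν) (f := fun y => f (x + y)) (C := M)
    (Eventually.of_forall fun y => hM _)

lemma integral_comp_add_le_add [IsProbabilityMeasure ν] (hf : IsBUC f) (hg : IsBUC g)
    (hfg : ∀ x, f x ≤ g x + ε) (x : Ed d) :
    ∫ y, f (x + y) ∂ν ≤ ∫ y, g (x + y) ∂ν + ε := by
  have hgx := hg.integrable_comp_add x ν
  calc ∫ y, f (x + y) ∂ν ≤ ∫ y, (g (x + y) + ε) ∂ν :=
        integral_mono (hf.integrable_comp_add x ν) (hgx.add (integrable_const _)) fun y => hfg _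
    _ = ∫ y, g (x + y) ∂ν + ε := by
        rw [integral_add hgx (integrable_const _), integral_const, probReal_univ, one_smul]

lemma integral_le_add_mul_integral_norm {g : Ed d → ℝ} (hp : 1 ≤ p) (hν : MemPp p ν)
    (hg : Integrable g ν) (hgC : ∀ y, g y ≤ a + C * ‖y‖) :
    ∫ y, g y ∂ν ≤ a + C * ∫ y, ‖y‖ ∂ν := by
  have := hν.1
  have hnorm := (hν.integrable_norm hp).const_mul C
  calc ∫ y, g y ∂ν ≤ ∫ y, (a + C * ‖y‖) ∂ν :=
        integral_mono hg ((integrable_const _).add hnorm) hgC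
    _ = a + C * ∫ y, ‖y‖ ∂ν := by
        rw [integral_add (integrable_const _) hnorm, integral_const_mul, integral_const,
          probReal_univ, one_smul]

lemma le_Sop (hM : ∀ x, |f x| ≤ M) (hν : MemPp p ν) {c : ℝ}
    (hc : PenaltyLE φ t (Wp p μt ν) c) (x : Ed d) :
    (∫ y, f (x + y) ∂ν) - c ≤ Sop p φ μt t f x := by
  refine le_csSup ⟨M, ?_⟩ ⟨ν, hν, c, hc.1, hc.2, rfl⟩
  rintro r ⟨ν', hν', c', hc', -, rfl⟩
  have := hν'.1
  linarith [(abs_le.1 (abs_integral_comp_add_le (ν := ν') hM x)).2]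

lemma penaltyLE_Wp_self (hp : 0 < p) (hφ : IsPenalty p φ) : PenaltyLE φ t (Wp p μt μt) 0 := by
  rw [Wp_self hp]
  exact hφ.penaltyLE_zero

lemma exists_Sop_sub_lt (hp : 0 < p) (hφ : IsPenalty p φ) (hμt : MemPp p μt) (t : ℝ)
    (f : Ed d → ℝ) (x : Ed d) (hε : 0 < ε) :
    ∃ (ν : Measure (Ed d)) (c : ℝ), MemPp p ν ∧ PenaltyLE φ t (Wp p μt ν) c ∧
      Sop p φ μt t f x - ε < (∫ y, f (x + y) ∂ν) - c := by
  have hself := penaltyLE_Wp_self (μt := μt) (t := t) hp hφ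
  obtain ⟨r, ⟨ν, hν, c, hc, hφc, rfl⟩, hr⟩ := exists_lt_of_lt_csSup
    (by exact ⟨_, μt, hμt, 0, le_rfl, hself.2, rfl⟩)
    (show Sop p φ μt t f x - ε < sSup _ from sub_lt_self _ hε)
  exact ⟨ν, c, hν, ⟨hc, hφc⟩, hr⟩

lemma Sop_le (hp : 0 < p) (hφ : IsPenalty p φ) (hμt : MemPp p μt)
    (h : ∀ (ν : Measure (Ed d)) (c : ℝ), MemPp p ν → PenaltyLE φ t (Wp p μt ν) c →
      (∫ y, f (x + y) ∂ν) - c ≤ a) : Sop p φ μt t f x ≤ a := by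
  refine le_of_forall_pos_le_add fun ε hε => ?_
  obtain ⟨ν, c, hν, hc, hlt⟩ := exists_Sop_sub_lt hp hφ hμt t f x hε
  linarith [h ν c hν hc]

lemma integral_le_Sop (hp : 0 < p) (hφ : IsPenalty p φ) (hμt : MemPp p μt) (hf : IsBUC f)
    (x : Ed d) : ∫ y, f (x + y) ∂μt ≤ Sop p φ μt t f x := by
  obtain ⟨M, hM⟩ := hf.exists_abs_le
  simpa using le_Sop hM hμt (penaltyLE_Wp_self hp hφ) x

lemma isEquivariantContraction_Sop (hp : 0 < p) (hφ : IsPenalty p φ) (hμt : MemPp p μt) (t : ℝ) :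
    IsEquivariantContraction (Sop p φ μt t) where
  abs_apply_le hf hM x := by
    have := hμt.1
    refine abs_le.2 ⟨?_, Sop_le hp hφ hμt fun ν c hν hc => ?_⟩
    · exact (abs_le.1 (abs_integral_comp_add_le hM x)).1.trans (integral_le_Sop hp hφ hμt hf x)
    · have := hν.1
      linarith [(abs_le.1 (abs_integral_comp_add_le (ν := ν) hM x)).2, hc.1]
  le_add hf hg hfg x := by
    obtain ⟨M, hM⟩ := hg.exists_abs_le
    refine Sop_le hp hφ hμt fun ν c hν hc => ?_
    have := hν.1
    linarith [integral_comp_add_le_add (ν := ν) hf hg hfg x, le_Sop hM hν hc x]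
  translate f h x := by simp only [Sop, add_right_comm x h]

lemma isEquivariantContraction_Smu [IsProbabilityMeasure (μ t)] :
    IsEquivariantContraction (Smu μ t) where
  abs_apply_le _ hM x := abs_integral_comp_add_le hM x
  le_add hf hg hfg x := integral_comp_add_le_add hf hg hfg x
  translate f h x := by simp only [Smu, add_right_comm x h]

lemma Sop_le_add_mul_integral_norm (hp : 1 ≤ p) (hφ : IsPenalty p φ) (hμt : MemPp p μt)
    (hf : IsBUC f) (hC : 0 ≤ C) (hfC : ∀ y, f (x + y) ≤ a + C * ‖y‖)
    (hK : ∀ r c, 0 ≤ r → PenaltyLE φ t r c → C * r ≤ c + K) :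
    Sop p φ μt t f x ≤ a + C * ∫ y, ‖y‖ ∂μt + K := by
  refine Sop_le (by linarith) hφ hμt fun ν c hν hc => ?_
  have := hν.1
  have hmean := integral_le_add_mul_integral_norm hp hν (hf.integrable_comp_add x ν) hfC
  have hmoment := mul_le_mul_of_nonneg_left (integral_norm_le_add_Wp hp hμt hν) hC
  linarith [hK _ c (Wp_nonneg p μt ν) hc]

lemma eventually_forall_abs_add_le (hf : IsBUC f) (hf0 : Tendsto f (cocompact (Ed d)) (𝓝 0))
    {η : ℝ} (hε : 0 < ε) (hη : 0 < η) :
    ∀ᶠ x in cocompact (Ed d), ∀ y, |f (x + y)| ≤ ε + η * ‖y‖ := by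
  obtain ⟨M, hM⟩ := hf.exists_abs_le
  have hfar : ∀ᶠ x in cocompact (Ed d), |f x| ≤ ε := by
    filter_upwards [Metric.tendsto_nhds.1 hf0 ε hε] with x hx
    simpa using hx.le
  rw [← Metric.cobounded_eq_cocompact] at hfar ⊢
  obtain ⟨R, -, hR⟩ := hasBasis_cobounded_norm.eventually_iff.1 hfar
  refine hasBasis_cobounded_norm.eventually_iff.2 ⟨R + M / η, trivial, fun x hx y => ?_⟩
  simp only [mem_ofPred_eq] at hx
  rcases le_or_gt R ‖x + y‖ with hxy | hxy
  · have : 0 ≤ η * ‖y‖ := by positivity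
    linarith [hR hxy]
  · have hy : M / η ≤ ‖y‖ := by linarith [norm_le_add_norm_add x y]
    linarith [hM (x + y), (div_le_iff₀' hη).1 hy]

lemma tendsto_Smu_cocompact [IsProbabilityMeasure (μ t)] (hf : IsC0 f) :
    Tendsto (Smu μ t f) (cocompact (Ed d)) (𝓝 0) := by
  obtain ⟨M, hM⟩ := hf.isBUC.exists_abs_le
  have hcont := hf.1
  have : (cocompact (Ed d)).IsCountablyGenerated := by
    rw [← Metric.cobounded_eq_cocompact, ← comap_norm_atTop]
    infer_instance
  have hlim : ∀ y : Ed d, Tendsto (fun x => f (x + y)) (cocompact (Ed d)) (𝓝 0) := fun y =>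
    hf.2.comp (Homeomorph.addRight y).isClosedEmbedding.tendsto_cocompact
  change Tendsto (fun x => ∫ y, f (x + y) ∂(μ t)) _ _
  simpa only [integral_zero] using tendsto_integral_filter_of_dominated_convergence (μ := μ t)
    (F := fun x y => f (x + y)) (f := fun _ => (0 : ℝ)) (fun _ => M)
    (Eventually.of_forall fun x => by fun_prop)
    (Eventually.of_forall fun x => Eventually.of_forall fun y => hM (x + y))
    (integrable_const M) (Eventually.of_forall hlim)

lemma eventually_Sop_le (hp : 1 < p) (hφ : IsPenalty p φ) (ht : 0 ≤ t) (hμt : MemPp p μt)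
    (hf : IsC0 f) (hε : 0 < ε) : ∀ᶠ x in cocompact (Ed d), Sop p φ μt t f x ≤ ε := by
  obtain ⟨K, hK, hKφ⟩ := hφ.exists_penaltyLE_mul_le hp 1
  set m := ∫ y, ‖y‖ ∂μt
  have hm : 0 ≤ m := integral_nonneg fun y => norm_nonneg y
  set η := min 1 (ε / 2 / (m + t * K + 1))
  have hη : 0 < η := by positivity
  have hηmK : η * (m + t * K) ≤ ε / 2 := calc
    η * (m + t * K) ≤ ε / 2 / (m + t * K + 1) * (m + t * K + 1) :=
      mul_le_mul (min_le_right _ _) (by linarith) (by positivity) (by positivity)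
    _ = ε / 2 := by field_simp
  filter_upwards [eventually_forall_abs_add_le hf.isBUC hf.2 (half_pos hε) hη] with x hx
  have hpenalty : ∀ r c, 0 ≤ r → PenaltyLE φ t r c → η * r ≤ c + η * (t * K) := by
    intro r c hr hc
    have hηc : η * c ≤ 1 * c := mul_le_mul_of_nonneg_right (min_le_left _ _) hc.1
    have := mul_le_mul_of_nonneg_left (hKφ t r c ht hr hc) hη.le
    linarith
  have := Sop_le_add_mul_integral_norm hp.le hφ hμt hf.isBUC hη.le
    (fun y => (le_abs_self _).trans (hx y)) hpenalty
  linarith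

lemma tendsto_Sop_cocompact (hp : 1 < p) (hφ : IsPenalty p φ) (ht : 0 ≤ t) (hμt : MemPp p (μ t))
    (hf : IsC0 f) : Tendsto (Sop p φ (μ t) t f) (cocompact (Ed d)) (𝓝 0) := by
  have := hμt.1
  refine tendsto_order.2 ⟨fun a ha => ?_, fun a ha => ?_⟩
  · filter_upwards [(tendsto_Smu_cocompact (μ := μ) (t := t) hf).eventually_const_lt ha] with x hx
    exact hx.trans_le (integral_le_Sop (by linarith) hφ hμt hf.isBUC x)
  · filter_upwards [eventually_Sop_le hp hφ ht hμt hf (half_pos ha)] with x hx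
    linarith

end OneStep

/-! ### Gluing of couplings along a kernel -/

section KernelConv

open ProbabilityTheory

/-- The law of `Y + Z`, where `Y` has law `ν` and, given `Y`, the conditional law of `Z` is `κ Y`;
for constant `κ` this is the convolution of measures. -/
def kernelConv {E : Type*} [MeasurableSpace E] [Add E] (ν : Measure E) (κ : Kernel E E) :
    Measure E :=
  (ν ⊗ₘ κ).map fun w => w.1 + w.2

/-- The kernel `y ↦ νs (q y)`, which selects one of countably many measures. -/
def selectKernel {E F ι : Type*} [MeasurableSpace E] [MeasurableSpace F] [MeasurableSpace ι]
    [MeasurableSingletonClass ι] [Countable ι] (νs : ι → Measure F) {q : E → ι}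
    (hq : Measurable q) : Kernel E F :=
  (Kernel.ofFunOfCountable νs).comap q hq

lemma isMarkovKernel_selectKernel {E F ι : Type*} [MeasurableSpace E] [MeasurableSpace F]
    [MeasurableSpace ι] [MeasurableSingletonClass ι] [Countable ι] {νs : ι → Measure F} {q : E → ι}
    (hq : Measurable q) (hνs : ∀ i, IsProbabilityMeasure (νs i)) :
    IsMarkovKernel (selectKernel νs hq) :=
  ⟨fun y => hνs (q y)⟩

section Basic

variable {E : Type*} [MeasurableSpace E] [Add E] [MeasurableAdd₂ E] {ν : Measure E}
  {κ : Kernel E E}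

lemma lintegral_kernelConv [SFinite ν] [IsSFiniteKernel κ] {f : E → ℝ≥0∞} (hf : Measurable f) :
    ∫⁻ x, f x ∂kernelConv ν κ = ∫⁻ y, ∫⁻ z, f (y + z) ∂κ y ∂ν := by
  rw [kernelConv, lintegral_map hf (by fun_prop), Measure.lintegral_compProd (by fun_prop)]

lemma isProbabilityMeasure_kernelConv [IsProbabilityMeasure ν] [IsMarkovKernel κ] :
    IsProbabilityMeasure (kernelConv ν κ) :=
  Measure.isProbabilityMeasure_map (by fun_prop)

lemma integrable_compProd_of_integrable_kernelConv {f : E → ℝ}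
    (hf : Integrable f (kernelConv ν κ)) : Integrable (fun w : E × E => f (w.1 + w.2)) (ν ⊗ₘ κ) :=
  (integrable_map_measure hf.1 (by fun_prop)).1 hf

lemma integral_kernelConv [SFinite ν] [IsSFiniteKernel κ] {f : E → ℝ}
    (hf : Integrable f (kernelConv ν κ)) :
    ∫ x, f x ∂kernelConv ν κ = ∫ y, ∫ z, f (y + z) ∂κ y ∂ν := by
  rw [← Measure.integral_compProd (integrable_compProd_of_integrable_kernelConv hf), kernelConv,
    integral_map (by fun_prop) hf.1]

lemma integrable_integral_add_of_integrable_kernelConv [SFinite ν] [IsSFiniteKernel κ] {f : E → ℝ}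
    (hf : Integrable f (kernelConv ν κ)) : Integrable (fun y => ∫ z, f (y + z) ∂κ y) ν :=
  (integrable_compProd_of_integrable_kernelConv hf).integral_compProd

end Basic

variable {d : ℕ} {p : ℝ} {γ : Measure (Ed d × Ed d)} {μs μt ν : Measure (Ed d)}

section Coupling

variable {κ : Kernel (Ed d) (Ed d)} {K : Kernel (Ed d) (Ed d × Ed d)} [SFinite γ]

lemma IsCoupling.kernelConv [IsSFiniteKernel κ] [IsSFiniteKernel K] (hγ : IsCoupling γ μs ν)
    (hK : ∀ y, IsCoupling (K y) μt (κ y)) :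
    IsCoupling (kernelConv γ (K.comap Prod.snd measurable_snd)) (μs.conv μt)
      (kernelConv ν κ) := by
  have : SFinite ν := hγ.2 ▸ inferInstance
  have : SFinite μt := (hK 0).1 ▸ inferInstance
  refine ⟨Measure.ext_of_lintegral _ fun F hF => ?_, Measure.ext_of_lintegral _ fun F hF => ?_⟩
  · rw [lintegral_map hF measurable_fst, lintegral_kernelConv (by fun_prop),
      Measure.lintegral_conv hF, ← hγ.1, lintegral_map (by fun_prop) measurable_fst]
    refine lintegral_congr fun u => ?_
    rw [← (hK u.2).1, lintegral_map (by fun_prop) measurable_fst]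
    rfl
  · have hmeas : Measurable fun y => ∫⁻ z, F (y + z) ∂κ y :=
      Measurable.lintegral_kernel_prod_right' (f := fun w : Ed d × Ed d => F (w.1 + w.2))
        (by fun_prop)
    rw [lintegral_map hF measurable_snd, lintegral_kernelConv (by fun_prop),
      lintegral_kernelConv hF, ← hγ.2, lintegral_map hmeas measurable_snd]
    refine lintegral_congr fun u => ?_
    rw [← (hK u.2).2, lintegral_map (by fun_prop) measurable_snd]
    rfl

lemma eLpNorm_sub_compProd_le [IsSFiniteKernel K] (hp : 0 < p) (hγν : γ.map Prod.snd = ν)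
    {b : Ed d → ℝ} (hb : Measurable b) (hKb : ∀ y, transportCost p (K y) ≤ ‖b y‖ₑ) :
    eLpNorm (fun w : (Ed d × Ed d) × (Ed d × Ed d) => w.2.2 - w.2.1) (ENNReal.ofReal p)
      (γ ⊗ₘ K.comap Prod.snd measurable_snd) ≤ eLpNorm b (ENNReal.ofReal p) ν := by
  have hp0 : ENNReal.ofReal p ≠ 0 := by simpa using hp
  simp only [transportCost, eLpNorm_eq_lintegral_rpow_enorm_toReal hp0 ENNReal.ofReal_ne_top,
    ENNReal.toReal_ofReal hp.le] at hKb ⊢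
  gcongr ?_ ^ _
  rw [Measure.lintegral_compProd (by fun_prop), ← hγν,
    lintegral_map (by fun_prop) measurable_snd]
  refine lintegral_mono fun u => ?_
  rw [← ENNReal.rpow_inv_le_iff hp, ← one_div]
  exact hKb u.2

lemma transportCost_kernelConv_le [IsMarkovKernel K] (hp : 1 ≤ p) (hγν : γ.map Prod.snd = ν)
    {b : Ed d → ℝ} (hb : Measurable b) (hKb : ∀ y, transportCost p (K y) ≤ ‖b y‖ₑ) :
    transportCost p (kernelConv γ (K.comap Prod.snd measurable_snd)) ≤
      transportCost p γ + eLpNorm b (ENNReal.ofReal p) ν := by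
  have hfst : (γ ⊗ₘ K.comap Prod.snd measurable_snd).map Prod.fst = γ := Measure.fst_compProd _ _
  have hdispl : (fun z : Ed d × Ed d => z.2 - z.1) ∘
      (fun w : (Ed d × Ed d) × (Ed d × Ed d) => w.1 + w.2) =
      (fun w => w.1.2 - w.1.1) + fun w => w.2.2 - w.2.1 := by
    ext1 w
    simp only [Function.comp_apply, Prod.fst_add, Prod.snd_add, Pi.add_apply]
    abel
  rw [transportCost, kernelConv, eLpNorm_map_measure (by fun_prop) (by fun_prop), hdispl]
  refine (eLpNorm_add_le (by fun_prop) (by fun_prop) (by simpa using hp)).trans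
    (add_le_add (le_of_eq ?_) (eLpNorm_sub_compProd_le (by linarith) hγν hb hKb))
  conv_rhs => rw [transportCost, ← hfst, eLpNorm_map_measure (by fun_prop) (by fun_prop)]
  rfl

end Coupling

section Wasserstein

lemma eLpNorm_add_const_le {Ω : Type*} [MeasurableSpace Ω] {m : Measure Ω} [IsProbabilityMeasure m]
    (hp : 1 ≤ p) {b : Ω → ℝ} (hb : MemLp b (ENNReal.ofReal p) m) {δ : ℝ} (hδ : 0 ≤ δ) :
    eLpNorm (fun y => b y + δ) (ENNReal.ofReal p) m ≤
      ENNReal.ofReal (lpNorm b (ENNReal.ofReal p) m + δ) := by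
  have hp1 : 1 ≤ ENNReal.ofReal p := by simpa using hp
  have hconst : eLpNorm (fun _ : Ω => δ) (ENNReal.ofReal p) m = ENNReal.ofReal δ := by
    rw [eLpNorm_const _ (zero_lt_one.trans_le hp1).ne' (IsProbabilityMeasure.ne_zero m)]
    simp [Real.enorm_of_nonneg hδ]
  rw [ENNReal.ofReal_add lpNorm_nonneg hδ, ofReal_lpNorm hb, ← hconst]
  exact eLpNorm_add_le hb.1 aestronglyMeasurable_const hp1

variable {ι : Type*} [MeasurableSpace ι] [MeasurableSingletonClass ι] [Countable ι]
  {νs : ι → Measure (Ed d)} {q : Ed d → ι}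

lemma exists_coupling_conv_kernelConv (hp : 1 ≤ p) (hμs : MemPp p μs) (hμt : MemPp p μt)
    (hν : MemPp p ν) (hνs : ∀ i, MemPp p (νs i)) (hq : Measurable q)
    (hL : MemLp (fun y => Wp p μt (νs (q y))) (ENNReal.ofReal p) ν) {δ : ℝ} (hδ : 0 < δ) :
    ∃ γ, IsCoupling γ (μs.conv μt) (kernelConv ν (selectKernel νs hq)) ∧ transportCost p γ ≤
      ENNReal.ofReal (Wp p μs ν +
        lpNorm (fun y => Wp p μt (νs (q y))) (ENNReal.ofReal p) ν + (δ + δ)) := by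
  have hp0 : 0 < p := by linarith
  have := hμs.1
  have := hμt.1
  have := hν.1
  have := isMarkovKernel_selectKernel hq fun i => (hνs i).1
  obtain ⟨γ, hγ, hγcost⟩ := exists_coupling_transportCost_le hp0 hμs hν hδ
  choose γs hγs hγscost using fun i => exists_coupling_transportCost_le hp0 hμt (hνs i) hδ
  have := hγ.isProbabilityMeasure
  have := isMarkovKernel_selectKernel hq fun i => (hγs i).isProbabilityMeasure
  refine ⟨_, hγ.kernelConv (K := selectKernel γs hq) fun y => hγs (q y), ?_⟩
  have hcost := transportCost_kernelConv_le (K := selectKernel γs hq) hp hγ.2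
    (b := fun y => Wp p μt (νs (q y)) + δ)
    ((measurable_of_countable fun i => Wp p μt (νs i) + δ).comp hq) fun y => by
      rw [Real.enorm_of_nonneg (add_nonneg (Wp_nonneg _ _ _) hδ.le)]
      exact hγscost (q y)
  calc _ ≤ _ := hcost
    _ ≤ ENNReal.ofReal (Wp p μs ν + δ) + ENNReal.ofReal
          (lpNorm (fun y => Wp p μt (νs (q y))) (ENNReal.ofReal p) ν + δ) :=
        add_le_add hγcost (eLpNorm_add_const_le hp hL hδ.le)
    _ = _ := by
        rw [← ENNReal.ofReal_add (add_nonneg (Wp_nonneg _ _ _) hδ.le)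
          (add_nonneg lpNorm_nonneg hδ.le), add_add_add_comm]

lemma memPp_kernelConv (hp : 1 ≤ p) (hμt : MemPp p μt)
    (hν : MemPp p ν) (hνs : ∀ i, MemPp p (νs i)) (hq : Measurable q)
    (hL : MemLp (fun y => Wp p μt (νs (q y))) (ENNReal.ofReal p) ν) :
    MemPp p (kernelConv ν (selectKernel νs hq)) := by
  obtain ⟨γ, hγ, hcost⟩ := exists_coupling_conv_kernelConv hp hν hμt hν hνs hq hL one_pos
  exact hγ.memPp_snd (by linarith) (hν.conv (by linarith) hμt)
    (hcost.trans_lt ENNReal.ofReal_lt_top)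

lemma Wp_conv_kernelConv_le (hp : 1 ≤ p) (hμs : MemPp p μs) (hμt : MemPp p μt)
    (hν : MemPp p ν) (hνs : ∀ i, MemPp p (νs i)) (hq : Measurable q)
    (hL : MemLp (fun y => Wp p μt (νs (q y))) (ENNReal.ofReal p) ν) :
    Wp p (μs.conv μt) (kernelConv ν (selectKernel νs hq)) ≤
      Wp p μs ν + lpNorm (fun y => Wp p μt (νs (q y))) (ENNReal.ofReal p) ν := by
  refine le_of_forall_pos_le_add fun δ hδ => ?_
  obtain ⟨γ, hγ, hcost⟩ := exists_coupling_conv_kernelConv hp hμs hμt hν hνs hq hL (half_pos hδ)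
  rw [add_halves] at hcost
  exact Wp_le_of_transportCost_le (by linarith) hγ
    (add_nonneg (add_nonneg (Wp_nonneg _ _ _) lpNorm_nonneg) hδ.le) hcost

end Wasserstein

end KernelConv

/-! ### The inequality `S(s) S(t) ≤ S(s + t)` -/

lemma exists_measurable_norm_sub_lt {E : Type*} [SeminormedAddCommGroup E]
    [TopologicalSpace.SeparableSpace E] [MeasurableSpace E] [OpensMeasurableSpace E] {δ : ℝ}
    (hδ : 0 < δ) : ∃ (u : ℕ → E) (q : E → ℕ), Measurable q ∧ ∀ y, ‖y - u (q y)‖ < δ := by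
  classical
  have hdense : ∀ y : E, ∃ n, ‖y - TopologicalSpace.denseSeq E n‖ < δ := fun y => by
    simpa only [dist_eq_norm] using
      (TopologicalSpace.denseRange_denseSeq E).exists_dist_lt y hδ
  refine ⟨TopologicalSpace.denseSeq E, fun y => Nat.find (hdense y),
    measurable_find hdense fun n => ?_, fun y => Nat.find_spec (hdense y)⟩
  exact (isOpen_lt (by fun_prop) continuous_const).measurableSet

section SubSemigroup

variable {d : ℕ} {p s t ε : ℝ} {φ : ℝ≥0 → ℝ≥0∞} {μs μt ν : Measure (Ed d)} {f : Ed d → ℝ}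

lemma exists_measurable_Sop_le (hp : 0 < p) (hφ : IsPenalty p φ) (hμt : MemPp p μt) (t : ℝ)
    (hf : IsBUC f) (hε : 0 < ε) :
    ∃ (νs : ℕ → Measure (Ed d)) (c : ℕ → ℝ) (q : Ed d → ℕ), Measurable q ∧
      (∀ i, MemPp p (νs i)) ∧ (∀ i, PenaltyLE φ t (Wp p μt (νs i)) (c i)) ∧
      ∀ y, Sop p φ μt t f y ≤ (∫ z, f (y + z) ∂νs (q y)) - c (q y) + ε := by
  obtain ⟨δ, hδ, hfδ⟩ := hf.exists_abs_translate_sub_le (ε := ε / 3) (by positivity)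
  obtain ⟨u, q, hq, hu⟩ := exists_measurable_norm_sub_lt (E := Ed d) hδ
  choose νs c hνs hc hnear using fun i =>
    exists_Sop_sub_lt hp hφ hμt t f (u i) (ε := ε / 3) (by positivity)
  refine ⟨νs, c, q, hq, hνs, hc, fun y => ?_⟩
  have := (hνs (q y)).1
  have hS := isEquivariantContraction_Sop hp hφ hμt t
  set h := y - u (q y)
  have hy : y = u (q y) + h := (add_sub_cancel _ _).symm
  have hclose := hfδ h (hu y)
  have hSop : Sop p φ μt t f y ≤ Sop p φ μt t f (u (q y)) + ε / 3 := by
    conv_lhs => rw [hy]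
    linarith [(abs_le.1 (hS.abs_translate_sub_le hf hclose (u (q y)))).2]
  have hmean : ∫ z, f (u (q y) + z) ∂νs (q y) ≤ ∫ z, f (y + z) ∂νs (q y) + ε / 3 := by
    have hshift : ∀ z, y + z = u (q y) + z + h := fun z => by
      rw [add_right_comm, ← hy]
    simp only [hshift]
    exact integral_comp_add_le_add hf (hf.translate h)
      (fun z => by linarith [(abs_le.1 (hclose z)).1]) _
  linarith [hnear (q y)]

section Selection

variable {a B : ℝ} {νs : ℕ → Measure (Ed d)} {c : ℕ → ℝ} {q : Ed d → ℕ}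

lemma memLp_Wp_of_penaltyLE [IsFiniteMeasure ν] (hp : 1 < p) (hφ : IsPenalty p φ) (ht : 0 ≤ t)
    (hc : ∀ i, PenaltyLE φ t (Wp p μt (νs i)) (c i)) (hq : Measurable q)
    (hcB : ∀ y, c (q y) ≤ B) :
    MemLp (fun y => Wp p μt (νs (q y))) (ENNReal.ofReal p) ν := by
  obtain ⟨K, -, hK⟩ := hφ.exists_penaltyLE_mul_le hp 1
  refine MemLp.of_bound ((measurable_of_countable fun i => Wp p μt (νs i)).comp
    hq).aestronglyMeasurable (B + t * K) (Eventually.of_forall fun y => ?_)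
  rw [Real.norm_of_nonneg (Wp_nonneg _ _ _)]
  linarith [hK t _ _ ht (Wp_nonneg _ _ _) (hc (q y)), hcB y]

lemma penaltyLE_Wp_conv_kernelConv (hp : 1 ≤ p) (hφ : IsPenalty p φ) (hμs : MemPp p μs)
    (hμt : MemPp p μt) (hs : 0 ≤ s) (ht : 0 ≤ t) (hν : MemPp p ν)
    (ha : PenaltyLE φ s (Wp p μs ν) a) (hνs : ∀ i, MemPp p (νs i))
    (hc : ∀ i, PenaltyLE φ t (Wp p μt (νs i)) (c i)) (hq : Measurable q)
    (hWL : MemLp (fun y => Wp p μt (νs (q y))) (ENNReal.ofReal p) ν)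
    (hcL : Integrable (fun y => c (q y)) ν) :
    PenaltyLE φ (s + t) (Wp p (μs.conv μt) (kernelConv ν (selectKernel νs hq)))
      (a + ∫ y, c (q y) ∂ν) := by
  have := hν.1
  have hjensen := hφ.penaltyLE_lpNorm (by linarith) ht (fun y => Wp_nonneg _ _ _) hWL hcL
    fun y => hc (q y)
  exact hφ.penaltyLE_of_le (hφ.penaltyLE_add hs ht (Wp_nonneg _ _ _) lpNorm_nonneg ha hjensen)
    (Wp_conv_kernelConv_le hp hμs hμt hν hνs hq hWL)

lemma integral_sub_le_Sop_conv (hp : 1 < p) (hφ : IsPenalty p φ) (hμs : MemPp p μs)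
    (hμt : MemPp p μt) (hs : 0 ≤ s) (ht : 0 ≤ t) (hf : IsBUC f) (hν : MemPp p ν)
    (ha : PenaltyLE φ s (Wp p μs ν) a) (hνs : ∀ i, MemPp p (νs i))
    (hc : ∀ i, PenaltyLE φ t (Wp p μt (νs i)) (c i)) (hq : Measurable q)
    (hcB : ∀ y, c (q y) ≤ B) (x : Ed d) {g : Ed d → ℝ} (hg : Integrable g ν)
    (hgf : ∀ y, g y ≤ (∫ z, f (x + (y + z)) ∂νs (q y)) - c (q y)) :
    ∫ y, g y ∂ν - a ≤ Sop p φ (μs.conv μt) (s + t) f x := by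
  have := hν.1
  have := isMarkovKernel_selectKernel hq fun i => (hνs i).1
  have := isProbabilityMeasure_kernelConv (ν := ν) (κ := selectKernel νs hq)
  obtain ⟨M, hM⟩ := hf.exists_abs_le
  have hWL : MemLp (fun y => Wp p μt (νs (q y))) (ENNReal.ofReal p) ν :=
    memLp_Wp_of_penaltyLE hp hφ ht hc hq hcB
  have hcL : Integrable (fun y => c (q y)) ν :=
    Integrable.of_bound ((measurable_of_countable c).comp hq).aestronglyMeasurable B
      (Eventually.of_forall fun y => by simpa [abs_of_nonneg (hc (q y)).1] using hcB y)
  have hfL := hf.integrable_comp_add x (kernelConv ν (selectKernel νs hq))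
  have hmeanL := integrable_integral_add_of_integrable_kernelConv hfL
  have hle := le_Sop hM (memPp_kernelConv hp.le hμt hν hνs hq hWL)
    (penaltyLE_Wp_conv_kernelConv hp.le hφ hμs hμt hs ht hν ha hνs hc hq hWL hcL) x
  calc ∫ y, g y ∂ν - a
      ≤ ∫ y, ((∫ z, f (x + (y + z)) ∂selectKernel νs hq y) - c (q y)) ∂ν - a :=
        sub_le_sub_right (integral_mono hg (hmeanL.sub hcL) hgf) a
    _ = ∫ y, f (x + y) ∂kernelConv ν (selectKernel νs hq) - (a + ∫ y, c (q y) ∂ν) := by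
        rw [integral_sub hmeanL hcL, integral_kernelConv hfL, sub_sub, add_comm a]
    _ ≤ Sop p φ (μs.conv μt) (s + t) f x := hle

end Selection

theorem Sop_Sop_le_Sop_conv (hp : 1 < p) (hφ : IsPenalty p φ) (hμs : MemPp p μs)
    (hμt : MemPp p μt) (hs : 0 ≤ s) (ht : 0 ≤ t) (hf : IsBUC f) (x : Ed d) :
    Sop p φ μs s (Sop p φ μt t f) x ≤ Sop p φ (μs.conv μt) (s + t) f x := by
  have hp0 : 0 < p := by linarith
  have hT := isEquivariantContraction_Sop hp0 hφ hμt t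
  obtain ⟨M, hM⟩ := hf.exists_abs_le
  refine Sop_le hp0 hφ hμs fun ν a hν ha => le_of_forall_pos_le_add fun ε hε => ?_
  have := hν.1
  obtain ⟨νs, c, q, hq, hνs, hc, hnear⟩ := exists_measurable_Sop_le hp0 hφ hμt t hf hε
  have hcB : ∀ y, c (q y) ≤ 2 * M + ε := fun y => by
    have := (hνs (q y)).1
    linarith [hnear y, (abs_le.1 (hT.abs_apply_le hf hM y)).1,
      (abs_le.1 (abs_integral_comp_add_le (ν := νs (q y)) hM y)).2]
  have hSop := (hT.isBUC hf).integrable_comp_add x ν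
  have hle := integral_sub_le_Sop_conv hp hφ hμs hμt hs ht hf hν ha hνs hc
    (hq.comp (measurable_const_add x)) (fun y => hcB (x + y)) x
    (hSop.sub (integrable_const ε)) fun y => by
      simpa only [Pi.sub_apply, Function.comp_apply, add_assoc, sub_le_iff_le_add]
        using hnear (x + y)
  simp only [Pi.sub_apply] at hle
  rw [integral_sub hSop (integrable_const ε), integral_const, probReal_univ, one_smul] at hle
  linarith

end SubSemigroup

/-! ### Iterates along dyadic partitions -/

lemma floor_two_mul_eq_or (a : ℝ) : ⌊2 * a⌋₊ = 2 * ⌊a⌋₊ ∨ ⌊2 * a⌋₊ = 2 * ⌊a⌋₊ + 1 := by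
  have hhalf : ⌊2 * a / 2⌋₊ = ⌊2 * a⌋₊ / 2 := Nat.floor_div_ofNat (2 * a) 2
  rw [mul_div_cancel_left₀ a two_ne_zero] at hhalf
  omega

lemma floor_two_pow_mul_mul_inv_le (n : ℕ) {t : ℝ} (ht : 0 ≤ t) :
    ⌊(2 : ℝ) ^ n * t⌋₊ * ((2 : ℝ) ^ n)⁻¹ ≤ t := by
  rw [mul_inv_le_iff₀ (by positivity), mul_comm t]
  exact Nat.floor_le (by positivity)

section Iterates

variable {d : ℕ} {p h r s t : ℝ} {φ : ℝ≥0 → ℝ≥0∞} {μ : ℝ → Measure (Ed d)} {f : Ed d → ℝ}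

lemma IsConvSemigroup.isEquivariantContraction_Sop (hp : 0 < p) (hφ : IsPenalty p φ)
    (hμ : IsConvSemigroup p μ) (ht : 0 ≤ t) : IsEquivariantContraction (Sop p φ (μ t) t) :=
  _root_.isEquivariantContraction_Sop hp hφ (hμ.2.2 t ht) t

lemma IsConvSemigroup.isEquivariantContraction_Smu (hμ : IsConvSemigroup p μ) (ht : 0 ≤ t) :
    IsEquivariantContraction (Smu μ t) :=
  have := (hμ.2.2 t ht).1
  _root_.isEquivariantContraction_Smu

lemma Sop_Sop_le (hp : 1 < p) (hφ : IsPenalty p φ) (hμ : IsConvSemigroup p μ) (hs : 0 ≤ s)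
    (ht : 0 ≤ t) (hf : IsBUC f) (x : Ed d) :
    Sop p φ (μ s) s (Sop p φ (μ t) t f) x ≤ Sop p φ (μ (s + t)) (s + t) f x := by
  rw [hμ.2.1 s t hs ht]
  exact Sop_Sop_le_Sop_conv hp hφ (hμ.2.2 s hs) (hμ.2.2 t ht) hs ht hf x

lemma Smu_add (hμ : IsConvSemigroup p μ) (hs : 0 ≤ s) (ht : 0 ≤ t) (hf : IsBUC f) (x : Ed d) :
    Smu μ (s + t) f x = Smu μ s (Smu μ t f) x := by
  have := (hμ.2.2 s hs).1
  have := (hμ.2.2 t ht).1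
  rw [Smu, hμ.2.1 s t hs ht, integral_conv (hf.integrable_comp_add x _)]
  simp only [Smu, add_assoc]

lemma Smu_le_Sop (hp : 0 < p) (hφ : IsPenalty p φ) (hμ : IsConvSemigroup p μ) (ht : 0 ≤ t)
    (hf : IsBUC f) (x : Ed d) : Smu μ t f x ≤ Sop p φ (μ t) t f x :=
  integral_le_Sop hp hφ (hμ.2.2 t ht) hf x

lemma Smu_le_iterate_Sop (hp : 0 < p) (hφ : IsPenalty p φ) (hμ : IsConvSemigroup p μ)
    (hh : 0 ≤ h) (hr : 0 ≤ r) (hf : IsBUC f) (k : ℕ) (x : Ed d) :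
    Smu μ (k * h + r) f x ≤ (Sop p φ (μ h) h)^[k] (Sop p φ (μ r) r f) x := by
  have hS := hμ.isEquivariantContraction_Sop hp hφ hh
  have hSr := (hμ.isEquivariantContraction_Sop hp hφ hr).isBUC hf
  induction k generalizing x with
  | zero => simpa using Smu_le_Sop hp hφ hμ hr hf x
  | succ k ih =>
    have hkr : 0 ≤ k * h + r := by positivity
    have hSmu := (hμ.isEquivariantContraction_Smu hkr).isBUC hf
    rw [Function.iterate_succ_apply', Nat.cast_succ, add_one_mul, add_comm (k * h) h, add_assoc,
      Smu_add hμ hh hkr hf]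
    exact (Smu_le_Sop hp hφ hμ hh hSmu x).trans (hS.mono hSmu ((hS.iterate k).isBUC hSr) ih x)

lemma iterate_Sop_le (hp : 1 < p) (hφ : IsPenalty p φ) (hμ : IsConvSemigroup p μ) (hh : 0 ≤ h)
    (hr : 0 ≤ r) (hf : IsBUC f) (k : ℕ) (x : Ed d) :
    (Sop p φ (μ h) h)^[k] (Sop p φ (μ r) r f) x ≤ Sop p φ (μ (k * h + r)) (k * h + r) f x := by
  have hS {u : ℝ} (hu : 0 ≤ u) := hμ.isEquivariantContraction_Sop (by linarith) hφ hu
  induction k generalizing x with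
  | zero => simp
  | succ k ih =>
    have hkr : 0 ≤ k * h + r := by positivity
    rw [Function.iterate_succ_apply', Nat.cast_succ, add_one_mul, add_comm (k * h) h, add_assoc]
    exact ((hS hh).mono (((hS hh).iterate k).isBUC ((hS hr).isBUC hf)) ((hS hkr).isBUC hf)
      ih x).trans (Sop_Sop_le hp hφ hμ hh hkr hf x)

lemma iterate_Sop_two_mul_le (hp : 1 < p) (hφ : IsPenalty p φ) (hμ : IsConvSemigroup p μ)
    (hh : 0 ≤ h) (hf : IsBUC f) (k : ℕ) (x : Ed d) :
    (Sop p φ (μ h) h)^[2 * k] f x ≤ (Sop p φ (μ (2 * h)) (2 * h))^[k] f x := by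
  have hS := hμ.isEquivariantContraction_Sop (by linarith) hφ hh
  have hS2 := hμ.isEquivariantContraction_Sop (t := 2 * h) (by linarith) hφ (by positivity)
  induction k generalizing x with
  | zero => rfl
  | succ k ih =>
    have hfk := (hS.iterate (2 * k)).isBUC hf
    have hle := Sop_Sop_le hp hφ hμ hh hh hfk x
    rw [← two_mul] at hle
    rw [mul_add_one, Function.iterate_succ_apply', Function.iterate_succ_apply',
      Function.iterate_succ_apply']
    exact hle.trans (hS2.mono hfk ((hS2.iterate k).isBUC hf) ih x)

lemma isEquivariantContraction_SiterN (hp : 0 < p) (hφ : IsPenalty p φ)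
    (hμ : IsConvSemigroup p μ) (n : ℕ) (ht : 0 ≤ t) :
    IsEquivariantContraction (SiterN p φ μ n t) :=
  ((hμ.isEquivariantContraction_Sop hp hφ (by positivity)).iterate _).comp
    (hμ.isEquivariantContraction_Sop hp hφ (sub_nonneg.2 (floor_two_pow_mul_mul_inv_le n ht)))

lemma Smu_le_SiterN (hp : 0 < p) (hφ : IsPenalty p φ) (hμ : IsConvSemigroup p μ) (ht : 0 ≤ t)
    (hf : IsBUC f) (n : ℕ) (x : Ed d) : Smu μ t f x ≤ SiterN p φ μ n t f x := by
  have hle := Smu_le_iterate_Sop (h := ((2 : ℝ) ^ n)⁻¹) hp hφ hμ (by positivity)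
    (sub_nonneg.2 (floor_two_pow_mul_mul_inv_le n ht)) hf ⌊(2 : ℝ) ^ n * t⌋₊ x
  rwa [add_sub_cancel] at hle

lemma SiterN_le_Sop (hp : 1 < p) (hφ : IsPenalty p φ) (hμ : IsConvSemigroup p μ) (ht : 0 ≤ t)
    (hf : IsBUC f) (n : ℕ) (x : Ed d) : SiterN p φ μ n t f x ≤ Sop p φ (μ t) t f x := by
  have hle := iterate_Sop_le (h := ((2 : ℝ) ^ n)⁻¹) hp hφ hμ (by positivity)
    (sub_nonneg.2 (floor_two_pow_mul_mul_inv_le n ht)) hf ⌊(2 : ℝ) ^ n * t⌋₊ x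
  rwa [add_sub_cancel] at hle

lemma SiterN_succ_le (hp : 1 < p) (hφ : IsPenalty p φ) (hμ : IsConvSemigroup p μ) (ht : 0 ≤ t)
    (hf : IsBUC f) (n : ℕ) (x : Ed d) :
    SiterN p φ μ (n + 1) t f x ≤ SiterN p φ μ n t f x := by
  have hS {u : ℝ} (hu : 0 ≤ u) := hμ.isEquivariantContraction_Sop (by linarith) hφ hu
  have hrem := sub_nonneg.2 (floor_two_pow_mul_mul_inv_le n ht)
  have hrem' := sub_nonneg.2 (floor_two_pow_mul_mul_inv_le (n + 1) ht)
  unfold SiterN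
  set h := ((2 : ℝ) ^ (n + 1))⁻¹
  have hh : 0 ≤ h := by positivity
  have hstep : ((2 : ℝ) ^ n)⁻¹ = 2 * h := by simp only [h, pow_succ]; field_simp
  have hfloor := floor_two_mul_eq_or ((2 : ℝ) ^ n * t)
  rw [← mul_assoc, ← pow_succ'] at hfloor
  rw [hstep] at hrem ⊢
  set k := ⌊(2 : ℝ) ^ n * t⌋₊
  have hSrem := (hS hrem).isBUC hf
  refine le_trans ?_ (iterate_Sop_two_mul_le hp hφ hμ hh hSrem k x)
  rcases hfloor with heven | hodd
  · rw [heven, Nat.cast_mul, Nat.cast_two, mul_comm 2 (k : ℝ), mul_assoc]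
  · rw [hodd] at hrem' ⊢
    rw [Function.iterate_succ_apply]
    refine ((hS hh).iterate (2 * k)).mono ((hS hh).isBUC ((hS hrem').isBUC hf)) hSrem
      (fun z => ?_) x
    convert Sop_Sop_le hp hφ hμ hh hrem' hf z using 3 <;> push_cast <;> ring

end Iterates

/-! ### Uniform convergence at a fixed time -/

lemma tendstoUniformly_of_antitone_of_tendsto_cocompact {X : Type*} [TopologicalSpace X]
    {F : ℕ → X → ℝ} {G : X → ℝ} (hF : ∀ n, Continuous (F n)) (hG : Continuous G)
    (hanti : Antitone F) (hlim : ∀ x, Tendsto (F · x) atTop (𝓝 (G x)))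
    (hF₀ : Tendsto (F 0) (cocompact X) (𝓝 0)) (hG₀ : Tendsto G (cocompact X) (𝓝 0)) :
    TendstoUniformly F G atTop := by
  refine Metric.tendstoUniformly_iff.2 fun ε hε => ?_
  have hfar : ∀ᶠ x in cocompact X, dist (F 0 x) (G x) < ε := by
    simpa using (hF₀.dist hG₀).eventually_lt_const (by simpa using hε)
  obtain ⟨K, hK, hKfar⟩ := mem_cocompact.1 hfar
  have hunif := Antitone.tendstoUniformlyOn_of_forall_tendsto hK (fun n => (hF n).continuousOn)
    (fun x _ _ _ hmn => hanti hmn x) hG.continuousOn (fun x _ => hlim x)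
  filter_upwards [Metric.tendstoUniformlyOn_iff.1 hunif ε hε] with n hn x
  by_cases hx : x ∈ K
  · exact hn x hx
  · have hle : F n x ≤ F 0 x := hanti n.zero_le x
    have hge : G x ≤ F n x := Antitone.le_of_tendsto (fun _ _ hmn => hanti hmn x) (hlim x) n
    have hdist : |F 0 x - G x| < ε := hKfar hx
    rw [dist_comm, Real.dist_eq]
    exact (abs_le_abs_of_nonneg (sub_nonneg.2 hge) (by gcongr)).trans_lt hdist

section Limit

variable {d : ℕ} {p t : ℝ} {φ : ℝ≥0 → ℝ≥0∞} {μ : ℝ → Measure (Ed d)} {f : Ed d → ℝ}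

lemma antitone_SiterN (hp : 1 < p) (hφ : IsPenalty p φ) (hμ : IsConvSemigroup p μ) (ht : 0 ≤ t)
    (hf : IsBUC f) : Antitone fun n => SiterN p φ μ n t f :=
  antitone_nat_of_succ_le fun n x => SiterN_succ_le hp hφ hμ ht hf n x

lemma tendsto_SiterN_Slim (hp : 1 < p) (hφ : IsPenalty p φ) (hμ : IsConvSemigroup p μ)
    (ht : 0 ≤ t) (hf : IsBUC f) (x : Ed d) :
    Tendsto (fun n => SiterN p φ μ n t f x) atTop (𝓝 (Slim p φ μ t f x)) :=
  tendsto_atTop_ciInf (fun _ _ hmn => antitone_SiterN hp hφ hμ ht hf hmn x)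
    ⟨Smu μ t f x, forall_mem_range.2 fun n => Smu_le_SiterN (by linarith) hφ hμ ht hf n x⟩

lemma uniformContinuous_Slim (hp : 1 < p) (hφ : IsPenalty p φ) (hμ : IsConvSemigroup p μ)
    (ht : 0 ≤ t) (hf : IsBUC f) : UniformContinuous (Slim p φ μ t f) := by
  refine uniformContinuous_of_exists_abs_translate_sub_le fun ε hε => ?_
  obtain ⟨δ, hδ, hfδ⟩ := hf.exists_abs_translate_sub_le hε
  have hlim := tendsto_SiterN_Slim hp hφ hμ ht hf
  exact ⟨δ, hδ, fun h hh z => le_of_tendsto' ((hlim (z + h)).sub (hlim z)).abs fun n =>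
    (isEquivariantContraction_SiterN (by linarith) hφ hμ n ht).abs_translate_sub_le hf
      (hfδ h hh) z⟩

lemma tendsto_SiterN_cocompact (hp : 1 < p) (hφ : IsPenalty p φ) (hμ : IsConvSemigroup p μ)
    (ht : 0 ≤ t) (hf : IsC0 f) (n : ℕ) :
    Tendsto (SiterN p φ μ n t f) (cocompact (Ed d)) (𝓝 0) := by
  have := (hμ.2.2 t ht).1
  exact tendsto_of_tendsto_of_tendsto_of_le_of_le (tendsto_Smu_cocompact hf)
    (tendsto_Sop_cocompact hp hφ ht (hμ.2.2 t ht) hf)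
    (Smu_le_SiterN (by linarith) hφ hμ ht hf.isBUC n) (SiterN_le_Sop hp hφ hμ ht hf.isBUC n)

lemma tendsto_Slim_cocompact (hp : 1 < p) (hφ : IsPenalty p φ) (hμ : IsConvSemigroup p μ)
    (ht : 0 ≤ t) (hf : IsC0 f) : Tendsto (Slim p φ μ t f) (cocompact (Ed d)) (𝓝 0) := by
  have := (hμ.2.2 t ht).1
  have hlim := tendsto_SiterN_Slim hp hφ hμ ht hf.isBUC
  refine tendsto_of_tendsto_of_tendsto_of_le_of_le (tendsto_Smu_cocompact (μ := μ) (t := t) hf)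
    (tendsto_SiterN_cocompact hp hφ hμ ht hf 0) (fun x => ?_) (fun x => ?_)
  · exact ge_of_tendsto' (hlim x) fun n => Smu_le_SiterN (by linarith) hφ hμ ht hf.isBUC n x
  · exact Antitone.le_of_tendsto
      (fun _ _ hmn => antitone_SiterN hp hφ hμ ht hf.isBUC hmn x) (hlim x) 0

theorem tendstoUniformly_SiterN_Slim (hp : 1 < p) (hφ : IsPenalty p φ)
    (hμ : IsConvSemigroup p μ) (ht : 0 ≤ t) (hf : IsC0 f) :
    TendstoUniformly (fun n => SiterN p φ μ n t f) (Slim p φ μ t f) atTop :=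
  tendstoUniformly_of_antitone_of_tendsto_cocompact
    (fun n => ((isEquivariantContraction_SiterN (by linarith) hφ hμ n ht).isBUC
      hf.isBUC).uniformContinuous.continuous)
    (uniformContinuous_Slim hp hφ hμ ht hf.isBUC).continuous
    (antitone_SiterN hp hφ hμ ht hf.isBUC) (tendsto_SiterN_Slim hp hφ hμ ht hf.isBUC)
    (tendsto_SiterN_cocompact hp hφ hμ ht hf 0) (tendsto_Slim_cocompact hp hφ hμ ht hf)

end Limit

/-! ### Continuity in time, uniformly in the step size -/

section TimeContinuity

variable {d : ℕ} {p ε : ℝ} {φ : ℝ≥0 → ℝ≥0∞} {μ : ℝ → Measure (Ed d)} {g : Ed d → ℝ}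

lemma exists_integral_norm_le (hp : 1 ≤ p) (hμ : IsConvSemigroup p μ)
    (hμ0 : WContinuousAtZero p μ) (hε : 0 < ε) :
    ∃ δ > 0, ∀ s, 0 ≤ s → s < δ → ∫ y, ‖y‖ ∂(μ s) ≤ ε := by
  obtain ⟨δ, hδ, hWδ⟩ := mem_nhdsGT_iff_exists_Ioo_subset.1 (hμ0.eventually_lt_const hε)
  refine ⟨δ, hδ, fun s hs hsδ => ?_⟩
  rcases hs.eq_or_lt with rfl | hs_pos
  · simpa [hμ.1] using hε.le
  · exact (integral_norm_le_Wp_dirac_zero hp (hμ.2.2 s hs)).trans (hWδ ⟨hs_pos, hsδ⟩).le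

lemma sub_mul_integral_norm_le_Smu {t a C : ℝ} {x : Ed d} (hp : 1 ≤ p) (hμt : MemPp p (μ t))
    (hg : IsBUC g) (hgC : ∀ y, a - C * ‖y‖ ≤ g (x + y)) :
    a - C * ∫ y, ‖y‖ ∂(μ t) ≤ Smu μ t g x := by
  have := hμt.1
  have hle := integral_le_add_mul_integral_norm (a := -a) (C := C) hp hμt
    (hg.integrable_comp_add x (μ t)).neg fun y => by
      simpa using (by linarith [hgC y] : -g (x + y) ≤ -a + C * ‖y‖)
  simp only [Pi.neg_apply, integral_neg] at hle
  unfold Smu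
  linarith

lemma exists_abs_iterate_Sop_sub_le (hp : 1 < p) (hφ : IsPenalty p φ) (hμ : IsConvSemigroup p μ)
    (hμ0 : WContinuousAtZero p μ) (hg : IsBUC g) (hε : 0 < ε) :
    ∃ δ > 0, ∀ (h r : ℝ) (k : ℕ), 0 ≤ h → 0 ≤ r → k * h + r < δ →
      ∀ x, |(Sop p φ (μ h) h)^[k] (Sop p φ (μ r) r g) x - g x| ≤ ε := by
  obtain ⟨C, hC, hgC⟩ := hg.exists_abs_translate_sub_le_add_mul_norm (ε := ε / 3) (by positivity)
  obtain ⟨K, hK, hCK⟩ := hφ.exists_penaltyLE_mul_le hp C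
  obtain ⟨δ, hδ, hmean⟩ := exists_integral_norm_le hp.le hμ hμ0
    (show 0 < ε / 3 / (C + 1) by positivity)
  refine ⟨min δ (ε / 3 / (K + 1)), by positivity, fun h r k hh hr hlt x => ?_⟩
  have hlower := Smu_le_iterate_Sop (by linarith) hφ hμ hh hr hg k x
  have hupper := iterate_Sop_le hp hφ hμ hh hr hg k x
  set s := k * h + r
  have hs : 0 ≤ s := by positivity
  have hsμ := hμ.2.2 s hs
  have hSmu := sub_mul_integral_norm_le_Smu (a := g x - ε / 3) (C := C) (x := x) hp.le hsμ hg
    fun y => by linarith [(abs_le.1 (hgC x y)).1]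
  have hSop := Sop_le_add_mul_integral_norm (a := g x + ε / 3) (x := x) hp.le hφ hsμ hg hC
    (fun y => by linarith [(abs_le.1 (hgC x y)).2]) fun r' c hr' hc => hCK s r' c hs hr' hc
  have hCmean : C * ∫ y, ‖y‖ ∂(μ s) ≤ ε / 3 := by
    have hle := (le_div_iff₀ (by positivity)).1 (hmean s hs (hlt.trans_le (min_le_left _ _)))
    have hnonneg : 0 ≤ ∫ y, ‖y‖ ∂(μ s) := integral_nonneg fun y => norm_nonneg y
    linarith
  have hsK : s * K ≤ ε / 3 := by
    have hle := (le_div_iff₀ (by positivity)).1 (hlt.trans_le (min_le_right _ _)).le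
    linarith
  exact abs_le.2 ⟨by linarith, by linarith⟩

lemma exists_abs_SiterN_sub_iterate_Sop_le (hp : 1 < p) (hφ : IsPenalty p φ)
    (hμ : IsConvSemigroup p μ) (hμ0 : WContinuousAtZero p μ) (hg : IsBUC g) (hε : 0 < ε) :
    ∃ δ > 0, ∀ (n j : ℕ) (t : ℝ), 0 ≤ t → j ≤ ⌊(2 : ℝ) ^ n * t⌋₊ → t - j * ((2 : ℝ) ^ n)⁻¹ < δ →
      ∀ x, |SiterN p φ μ n t g x
        - (Sop p φ (μ ((2 : ℝ) ^ n)⁻¹) ((2 : ℝ) ^ n)⁻¹)^[j] g x| ≤ ε := by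
  obtain ⟨δ, hδ, hshort⟩ := exists_abs_iterate_Sop_sub_le hp hφ hμ hμ0 hg hε
  refine ⟨δ, hδ, fun n j t ht hj hjt x => ?_⟩
  have hrem := sub_nonneg.2 (floor_two_pow_mul_mul_inv_le n ht)
  unfold SiterN
  set h := ((2 : ℝ) ^ n)⁻¹
  have hh : 0 ≤ h := by positivity
  obtain ⟨m, hm⟩ := Nat.exists_eq_add_of_le hj
  rw [hm] at hrem ⊢
  have hS {u : ℝ} (hu : 0 ≤ u) := hμ.isEquivariantContraction_Sop (by linarith) hφ hu
  have hmδ : m * h + (t - (j + m : ℕ) * h) < δ := by push_cast; linarith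
  rw [Function.iterate_add_apply]
  exact ((hS hh).iterate j).abs_sub_le (((hS hh).iterate m).isBUC ((hS hrem).isBUC hg)) hg
    (hshort h _ m hh hrem hmδ) x

lemma exists_abs_SiterN_sub_SiterN_le (hp : 1 < p) (hφ : IsPenalty p φ)
    (hμ : IsConvSemigroup p μ) (hμ0 : WContinuousAtZero p μ) (hg : IsBUC g) (hε : 0 < ε) :
    ∃ δ > 0, ∀ (n : ℕ) (s t : ℝ), 0 ≤ s → 0 ≤ t → |s - t| < δ → ((2 : ℝ) ^ n)⁻¹ < δ →
      ∀ x, |SiterN p φ μ n s g x - SiterN p φ μ n t g x| ≤ ε := by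
  obtain ⟨δ, hδ, hshort⟩ := exists_abs_SiterN_sub_iterate_Sop_le hp hφ hμ hμ0 hg (half_pos hε)
  refine ⟨δ / 2, half_pos hδ, fun n s t hs ht hst hn x => ?_⟩
  wlog hle : s ≤ t generalizing s t
  · rw [abs_sub_comm]
    exact this t s ht hs (by rwa [abs_sub_comm]) (le_of_not_ge hle)
  set j := ⌊(2 : ℝ) ^ n * s⌋₊ with hj
  have hsj : s - j * ((2 : ℝ) ^ n)⁻¹ < δ / 2 := by
    have hfloor := (lt_div_iff₀' (by positivity)).2 (Nat.lt_floor_add_one ((2 : ℝ) ^ n * s))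
    rw [← hj, div_eq_mul_inv] at hfloor
    linarith
  have hj_le : j ≤ ⌊(2 : ℝ) ^ n * t⌋₊ := Nat.floor_mono (by gcongr)
  have hs_approx := hshort n j s hs le_rfl (by linarith) x
  have ht_approx := hshort n j t ht hj_le (by linarith [(abs_lt.1 hst).1]) x
  rw [abs_sub_comm] at ht_approx
  exact (abs_sub_le _ _ _).trans (by linarith)

end TimeContinuity

theorem stmt_10_general {d : ℕ} {p : ℝ} (hp : 1 < p) {φ : ℝ≥0 → ℝ≥0∞} (hφ : IsPenalty p φ)
    {μ : ℝ → Measure (Ed d)} (hμ : IsConvSemigroup p μ) (hμ0 : WContinuousAtZero p μ)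
    {t : ℝ} {tseq : ℕ → ℝ} (htseq : ∀ n, 0 ≤ tseq n) (hlim : Tendsto tseq atTop (𝓝 t))
    {g : Ed d → ℝ} (hg : IsC0 g) {gseq : ℕ → Ed d → ℝ} (hgseq : ∀ n, IsBUC (gseq n))
    (hgg : TendstoUniformly gseq g atTop) :
    TendstoUniformly (fun n x => SiterN p φ μ n (tseq n) (gseq n) x) (Slim p φ μ t g) atTop := by
  have ht : 0 ≤ t := ge_of_tendsto' hlim htseq
  refine Metric.tendstoUniformly_iff.2 fun ε hε => ?_
  have hε3 : 0 < ε / 3 := by positivity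
  obtain ⟨δ, hδ, htime⟩ := exists_abs_SiterN_sub_SiterN_le hp hφ hμ hμ0 hg.isBUC hε3
  have hstep : Tendsto (fun n : ℕ => ((2 : ℝ) ^ n)⁻¹) atTop (𝓝 0) :=
    tendsto_inv_atTop_zero.comp (tendsto_pow_atTop_atTop_of_one_lt one_lt_two)
  have hfixed := Metric.tendstoUniformly_iff.1 (tendstoUniformly_SiterN_Slim hp hφ hμ ht hg)
  filter_upwards [hfixed _ hε3, Metric.tendstoUniformly_iff.1 hgg _ hε3,
    hlim (Metric.ball_mem_nhds t hδ), hstep.eventually_lt_const hδ] with n hn hgn htn hδn x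
  calc dist (Slim p φ μ t g x) (SiterN p φ μ n (tseq n) (gseq n) x)
      ≤ dist (Slim p φ μ t g x) (SiterN p φ μ n t g x)
        + dist (SiterN p φ μ n t g x) (SiterN p φ μ n (tseq n) g x)
        + dist (SiterN p φ μ n (tseq n) g x) (SiterN p φ μ n (tseq n) (gseq n) x) :=
        dist_triangle4 _ _ _ _
    _ < ε / 3 + ε / 3 + ε / 3 := by
        refine add_lt_add_of_lt_of_le (add_lt_add_of_lt_of_le (hn x) ?_) ?_
        · exact htime n t (tseq n) ht (htseq n) (by rwa [abs_sub_comm]) hδn x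
        · exact (isEquivariantContraction_SiterN (by linarith) hφ hμ n (htseq n)).abs_sub_le
            hg.isBUC (hgseq n) (fun y => (hgn y).le) x
    _ = ε := by ring

/-- if `tₙ ∈ 2⁻ⁿℕ₀`, `tₙ ≤ t`, `tₙ → t`, and `‖gₙ − g‖_∞ → 0`, then
`‖𝒮ⁿ(tₙ)gₙ − 𝒮(t)g‖_∞ → 0`. -/
theorem stmt_10 (d : ℕ) (hd : 1 ≤ d) (p : ℝ) (hp : 1 < p)
    (φ : ℝ≥0 → ℝ≥0∞) (hφ : IsPenalty p φ)
    (μ : ℝ → Measure (Ed d)) (hμ : IsConvSemigroup p μ) (hμ0 : WContinuousAtZero p μ)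
    (t : ℝ) (ht : 0 ≤ t) (tseq : ℕ → ℝ)
    (hdyadic : ∀ n, ∃ k : ℕ, tseq n = (k : ℝ) / 2 ^ n)
    (hle : ∀ n, tseq n ≤ t) (hlim : Tendsto tseq atTop (𝓝 t))
    (g : C₀(Ed d, ℝ)) (gseq : ℕ → C₀(Ed d, ℝ))
    (hg : Tendsto (fun n => ‖gseq n - g‖) atTop (𝓝 0)) :
    TendstoUniformly (fun n x => SiterN p φ μ n (tseq n) (⇑(gseq n)) x)
      (Slim p φ μ t (⇑g)) atTop := by
  refine stmt_10_general hp hφ hμ hμ0 (fun n => ?_) hlim ⟨g.continuous, zero_at_infty g⟩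
    (fun n => IsC0.isBUC ⟨(gseq n).continuous, zero_at_infty (gseq n)⟩)
    (ZeroAtInftyContinuousMap.tendsto_iff_tendstoUniformly.1
      (tendsto_iff_norm_sub_tendsto_zero.2 hg))
  obtain ⟨k, hk⟩ := hdyadic n
  exact hk ▸ by positivity
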